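/- arXiv:2301.08547 — 3 statements merged into one kernel-verified Lean document; each statement's English description precedes it below -/
import Mathlib

section
/- Let r ≥ 1 be an integer and let B_r = {x ∈ V : d_G(0,x) ≤ r} be the ball of radius r about 0 in the graph metric. Suppose every vertex of G has degree at most 6 and that R_eff(0, V∖B_r) ≤ r. Then the number of collisions of two independent simple random walks on G killed upon exiting B_r, both started at 0, satisfies the second-moment bound E_{0,0}(Z_{B_r}²) ≤ 144r² + 6r. -/
open MeasureTheory ENNReal
open scoped Classical

noncomputable section

variable {V : Type*}

/-- The cemetery-extended state space `B ∪ {†}` carries the discrete σ-algebra. -/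
instance : MeasurableSpace (Option V) := ⊤

/-- One-step transition probabilities of the simple random walk on `G` killed
upon exiting `B`; the cemetery state `†` is `none`. -/
def killedStep (G : SimpleGraph V) [G.LocallyFinite] (B : Set V) :
    Option V → Option V → ℝ≥0∞
  | some x, some y =>
      if x ∈ B ∧ G.Adj x y ∧ y ∈ B then ((G.degree x : ℝ≥0∞))⁻¹ else 0
  | some x, none =>
      if x ∈ B then
        (((G.neighborFinset x).filter (fun y => y ∉ B)).card : ℝ≥0∞) / (G.degree x : ℝ≥0∞)
      else 1
  | none, some _ => 0
  | none, none => 1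

/-- Probability that the killed walk started at `a` follows `w` for its first `n` steps. -/
def killedCylProb (G : SimpleGraph V) [G.LocallyFinite] (B : Set V) (a : V)
    {n : ℕ} (w : Fin (n + 1) → Option V) : ℝ≥0∞ :=
  (if w 0 = some a then 1 else 0) *
    ∏ i : Fin n, killedStep G B (w i.castSucc) (w i.succ)

/-- `μ` is the law of the simple random walk on `G` killed upon exiting `B`, started at `a`:
it is a probability measure on trajectories with the correct finite-dimensional
distributions. -/
def IsKilledWalkLaw (G : SimpleGraph V) [G.LocallyFinite] (B : Set V)
    (a : V) (μ : Measure (ℕ → Option V)) : Prop :=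
  IsProbabilityMeasure μ ∧
    ∀ (n : ℕ) (w : Fin (n + 1) → Option V),
      μ {ω | ∀ i : Fin (n + 1), ω i = w i} = killedCylProb G B a w

/-- `ν` is the joint law of two independent killed walks started at `a` and `b`. -/
def IsKilledPairLaw (G : SimpleGraph V) [G.LocallyFinite] (B : Set V)
    (a b : V) (ν : Measure (ℕ → Option V × Option V)) : Prop :=
  IsProbabilityMeasure ν ∧
    ∀ (n : ℕ) (w : Fin (n + 1) → Option V × Option V),
      ν {ω | ∀ i : Fin (n + 1), ω i = w i} =
        killedCylProb G B a (fun i => (w i).1) * killedCylProb G B b (fun i => (w i).2)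

/-- The number of collisions `Z_B = Σ_{n ≥ 0} 1(Xₙ = Yₙ ∈ B)` of the two coordinate
walks along a trajectory. -/
def collisions (B : Set V) (ω : ℕ → Option V × Option V) : ℝ≥0∞ :=
  ∑' n : ℕ, if ∃ x ∈ B, (ω n).1 = some x ∧ (ω n).2 = some x then 1 else 0

/-- The Dirichlet energy `ℰ(f,f) = (1/2) Σ_{x∼y} (f x - f y)²` of `f : V → ℝ`. -/
def energy (G : SimpleGraph V) (f : V → ℝ) : ℝ≥0∞ :=
  (1 / 2) * ∑' p : V × V,
    if G.Adj p.1 p.2 then ENNReal.ofReal ((f p.1 - f p.2) ^ 2) else 0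

/-- The effective resistance between `A₁` and `A₂` in `G`, every edge being a unit
resistor: its inverse is the infimum of the energies of finite-energy functions
that are `1` on `A₁` and `0` on `A₂`. -/
def effRes (G : SimpleGraph V) (A₁ A₂ : Set V) : ℝ≥0∞ :=
  (⨅ f ∈ {f : V → ℝ | energy G f ≠ ⊤ ∧ (∀ x ∈ A₁, f x = 1) ∧ ∀ x ∈ A₂, f x = 0},
    energy G f)⁻¹

/-! ### Graph preliminaries -/

lemma sm_exists_pred (G : SimpleGraph V) (hconn : G.Connected) (o x : V) (n : ℕ)
    (h : G.dist o x = n + 1) : ∃ y, G.Adj y x ∧ G.dist o y = n := by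
  obtain ⟨p, hp⟩ := hconn.exists_walk_length_eq_dist x o
  rw [SimpleGraph.dist_comm, h] at hp
  cases p with
  | nil => simp at hp
  | @cons _ y _ hadj q =>
    refine ⟨y, hadj.symm, ?_⟩
    have h1 : G.dist y o ≤ q.length := SimpleGraph.dist_le q
    have h2 : q.length = n := by simpa using hp
    have h3 : G.dist o x ≤ G.dist o y + G.dist y x := hconn.dist_triangle
    have h4 : G.dist y x = 1 := SimpleGraph.dist_eq_one_iff_adj.mpr hadj.symm
    rw [SimpleGraph.dist_comm] at h1
    omega

lemma sm_ball_finite (G : SimpleGraph V) [G.LocallyFinite] (hconn : G.Connected) (o : V) (n : ℕ) :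
    {x : V | G.dist o x ≤ n}.Finite := by
  induction n with
  | zero =>
    refine (Set.finite_singleton o).subset ?_
    intro x hx
    have : G.dist o x = 0 := by simpa using hx
    have := (hconn.dist_eq_zero_iff).1 this
    simp [this]
  | succ n ih =>
    have : (⋃ y ∈ {x : V | G.dist o x ≤ n}, (↑(G.neighborFinset y) : Set V)).Finite :=
      ih.biUnion (fun y _ => (G.neighborFinset y).finite_toSet)
    refine (ih.union this).subset ?_
    intro x hx
    have hx' : G.dist o x ≤ n + 1 := hx
    rcases Nat.lt_or_ge n (G.dist o x) with h | h
    · right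
      obtain ⟨y, hy, hd⟩ := sm_exists_pred G hconn o x n (by omega)
      simp only [Set.mem_iUnion]
      exact ⟨y, by simp [hd], by simpa using hy⟩
    · left; exact h

lemma sm_countable (G : SimpleGraph V) [G.LocallyFinite] (hconn : G.Connected) (o : V) :
    Countable V := by
  rw [← Set.countable_univ_iff]
  have : (Set.univ : Set V) = ⋃ n : ℕ, {x : V | G.dist o x ≤ n} := by
    ext x; simp only [Set.mem_univ, Set.mem_iUnion, true_iff]; exact ⟨G.dist o x, le_refl (G.dist o x)⟩
  rw [this]
  exact Set.countable_iUnion (fun n => (sm_ball_finite G hconn o n).countable)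

lemma sm_degree_pos (G : SimpleGraph V) [G.LocallyFinite] (hconn : G.Connected)
    (hinf : Infinite V) (x : V) : 0 < G.degree x := by
  have : Nontrivial V := inferInstance
  exact hconn.preconnected.degree_pos_of_nontrivial x

/-! ### The Markov property -/

instance smDiscrete : DiscreteMeasurableSpace (Option V) := ⟨fun _ => trivial⟩

/-- pair kernel -/
def pairK (G : SimpleGraph V) [G.LocallyFinite] (B : Set V)
    (s t : Option V × Option V) : ℝ≥0∞ := killedStep G B s.1 t.1 * killedStep G B s.2 t.2

/-- pair operator -/
def pairOp (G : SimpleGraph V) [G.LocallyFinite] (B : Set V)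
    (g : Option V × Option V → ℝ≥0∞) (s : Option V × Option V) : ℝ≥0∞ :=
  ∑' t, pairK G B s t * g t

lemma sm_cyl_snoc (G : SimpleGraph V) [G.LocallyFinite] (B : Set V) (a : V) {n : ℕ}
    (w : Fin (n + 2) → Option V) :
    killedCylProb G B a w = killedCylProb G B a (fun i : Fin (n + 1) => w i.castSucc) *
      killedStep G B (w (Fin.last n).castSucc) (w (Fin.last (n + 1))) := by
  unfold killedCylProb
  rw [Fin.prod_univ_castSucc, ← mul_assoc]
  rfl

lemma sm_lintegral_cyl [Countable V] (ν : Measure (ℕ → Option V × Option V)) (n : ℕ)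
    (F : (Fin (n + 1) → Option V × Option V) → ℝ≥0∞) :
    ∫⁻ ω, F (fun i => ω i) ∂ν = ∑' w, F w * ν {ω | ∀ i : Fin (n + 1), ω i = w i} := by
  have hm : Measurable (fun (ω : ℕ → Option V × Option V) (i : Fin (n + 1)) => ω i) := by
    fun_prop
  rw [← lintegral_map (f := F) (Measurable.of_discrete) hm, lintegral_countable']
  congr 1 with w
  rw [Measure.map_apply hm (measurableSet_singleton w)]
  congr 2
  ext ω
  simp [funext_iff]

lemma sm_markov (G : SimpleGraph V) [G.LocallyFinite] [Countable V] (B : Set V) (a b : V)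
    (ν : Measure (ℕ → Option V × Option V)) (hν : IsKilledPairLaw G B a b ν) (n : ℕ)
    (F : (Fin (n + 1) → Option V × Option V) → ℝ≥0∞) (g : Option V × Option V → ℝ≥0∞) :
    ∫⁻ ω, F (fun i => ω i) * g (ω (n + 1)) ∂ν =
      ∫⁻ ω, F (fun i => ω i) * pairOp G B g (ω n) ∂ν := by
  have h1 := sm_lintegral_cyl ν (n + 1)
    (fun w => F (fun i => w i.castSucc) * g (w (Fin.last (n + 1))))
  have h2 := sm_lintegral_cyl ν n (fun w => F w * pairOp G B g (w (Fin.last n)))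
  simp only [Fin.val_castSucc, Fin.val_last] at h1 h2
  rw [h1, h2, ← (Fin.snocEquiv (fun _ : Fin (n + 2) => Option V × Option V)).tsum_eq,
    ENNReal.tsum_prod', ENNReal.tsum_comm]
  congr 1 with w
  simp only [hν.2]
  rw [mul_right_comm]
  unfold pairOp
  rw [← ENNReal.tsum_mul_left]
  congr 1 with t
  rw [sm_cyl_snoc, sm_cyl_snoc]
  simp only [Fin.snocEquiv, Equiv.coe_fn_mk, Fin.snoc_castSucc, Fin.snoc_last, pairK]
  ring

lemma sm_markov_iter (G : SimpleGraph V) [G.LocallyFinite] [Countable V] (B : Set V) (a b : V)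
    (ν : Measure (ℕ → Option V × Option V)) (hν : IsKilledPairLaw G B a b ν) (m k : ℕ)
    (f g : Option V × Option V → ℝ≥0∞) :
    ∫⁻ ω, f (ω m) * g (ω (m + k)) ∂ν =
      ∫⁻ ω, f (ω m) * ((pairOp G B)^[k] g) (ω m) ∂ν := by
  induction k generalizing g with
  | zero => rfl
  | succ k ih =>
    have := sm_markov G B a b ν hν (m + k) (fun w => f (w ⟨m, by omega⟩)) g
    simp only at this
    rw [Function.iterate_succ_apply, ← ih, ← this]
    rfl

lemma sm_zero (G : SimpleGraph V) [G.LocallyFinite] [Countable V] (B : Set V) (a b : V)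
    (ν : Measure (ℕ → Option V × Option V)) (hν : IsKilledPairLaw G B a b ν)
    (f : Option V × Option V → ℝ≥0∞) :
    ∫⁻ ω, f (ω 0) ∂ν = f (some a, some b) := by
  have h := sm_lintegral_cyl ν 0 (fun w => f (w 0))
  simp only [Fin.val_zero] at h
  rw [h, tsum_eq_single (fun _ => (some a, some b))]
  · rw [hν.2]; simp [killedCylProb]
  · intro w hw
    rw [hν.2]
    by_cases h1 : (w 0).1 = some a
    · by_cases h2 : (w 0).2 = some b
      · exfalso; apply hw; funext i
        rw [show i = 0 from Fin.ext (by have := i.2; simp)]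
        exact Prod.ext h1 h2
      · simp [killedCylProb, h2]
    · simp [killedCylProb, h1]

/-- indicator of a collision -/
def diagInd (B : Set V) (s : Option V × Option V) : ℝ≥0∞ :=
  if ∃ x ∈ B, s.1 = some x ∧ s.2 = some x then 1 else 0

lemma sm_partial_sq (N : ℕ) : ∀ d : ℕ → ℝ≥0∞, (∀ n, d n * d n = d n) →
    (∑ n ∈ Finset.range N, d n) ^ 2 ≤ (∑' m, d m) + 2 * ∑' m, ∑' k, d m * d (m + (k + 1)) := by
  induction N with
  | zero => intro d _; simp
  | succ N ih =>
    intro d hd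
    have h := ih (fun n => d (n + 1)) (fun n => hd (n + 1))
    rw [Finset.sum_range_succ', add_comm, add_sq, sq (d 0), hd,
      tsum_eq_zero_add' (f := d) ENNReal.summable,
      tsum_eq_zero_add' (f := fun m => ∑' k, d m * d (m + (k + 1))) ENNReal.summable]
    have h1 : d 0 * ∑ n ∈ Finset.range N, d (n + 1) ≤ ∑' k, d 0 * d (0 + (k + 1)) := by
      rw [ENNReal.tsum_mul_left]
      simp only [zero_add]
      gcongr
      exact ENNReal.sum_le_tsum _
    have h2 : ∀ m k, d (m + 1 + (k + 1)) = d (m + (k + 1) + 1) := by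
      intro m k; congr 1; omega
    simp only [h2]
    calc _ = d 0 + 2 * (d 0 * ∑ n ∈ Finset.range N, d (n + 1)) +
          (∑ n ∈ Finset.range N, d (n + 1)) ^ 2 := by ring
      _ ≤ d 0 + 2 * (∑' k, d 0 * d (0 + (k + 1))) + ((∑' m, d (m + 1)) +
          2 * ∑' m, ∑' k, d (m + 1) * d (m + (k + 1) + 1)) := by gcongr
      _ = _ := by ring

lemma sm_collisions_sq_le (B : Set V) (ω : ℕ → Option V × Option V) :
    (collisions B ω) ^ 2 ≤ (∑' m, diagInd B (ω m)) +
      2 * ∑' m, ∑' k, diagInd B (ω m) * diagInd B (ω (m + (k + 1))) := by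
  have hc : collisions B ω = ∑' n, diagInd B (ω n) := rfl
  rw [hc]
  refine le_of_tendsto ((ENNReal.continuous_pow 2).tendsto _ |>.comp
    (ENNReal.tendsto_nat_tsum (fun n => diagInd B (ω n)))) (Filter.Eventually.of_forall ?_)
  intro N
  refine sm_partial_sq N (fun n => diagInd B (ω n)) ?_
  intro n
  simp only [diagInd]; split_ifs <;> simp

/-- Expected squared number of collisions, given a uniform bound on the expected
number of collisions started from a diagonal point. -/
lemma sm_second_moment (G : SimpleGraph V) [G.LocallyFinite] [Countable V] (B : Set V) (o : V)
    (ν : Measure (ℕ → Option V × Option V)) (hν : IsKilledPairLaw G B o o ν) (C D : ℝ≥0∞)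
    (h0 : ∑' k, ((pairOp G B)^[k] (diagInd B)) (some o, some o) ≤ C)
    (h1 : ∀ x ∈ B, ∑' k, ((pairOp G B)^[k] (diagInd B)) (some x, some x) ≤ D) :
    ∫⁻ ω, (collisions B ω) ^ 2 ∂ν ≤ C + 2 * (D * C) := by
  have hmeas : ∀ (f : Option V × Option V → ℝ≥0∞) (m : ℕ),
      Measurable (fun ω : ℕ → Option V × Option V => f (ω m)) := fun f m =>
    (Measurable.of_discrete (f := f)).comp (measurable_pi_apply m)
  have hE : ∑' m, ∫⁻ ω, diagInd B (ω m) ∂ν ≤ C := by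
    refine le_trans (le_of_eq ?_) h0
    congr 1 with m
    have := sm_markov_iter G B o o ν hν 0 m (fun _ => 1) (diagInd B)
    simp only [one_mul, zero_add] at this
    rw [this, sm_zero G B o o ν hν]
  calc ∫⁻ ω, (collisions B ω) ^ 2 ∂ν
      ≤ ∫⁻ ω, ((∑' m, diagInd B (ω m)) +
        2 * ∑' m, ∑' k, diagInd B (ω m) * diagInd B (ω (m + (k + 1)))) ∂ν :=
        lintegral_mono (fun ω => sm_collisions_sq_le B ω)
    _ = (∑' m, ∫⁻ ω, diagInd B (ω m) ∂ν) +
        2 * ∑' m, ∑' k, ∫⁻ ω, diagInd B (ω m) * diagInd B (ω (m + (k + 1))) ∂ν := by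
        rw [lintegral_add_left (Measurable.tsum (fun m => hmeas _ m)),
          lintegral_tsum (fun m => (hmeas _ m).aemeasurable), lintegral_const_mul, lintegral_tsum]
        · congr 3 with m
          rw [lintegral_tsum]
          exact fun k => ((hmeas _ _).mul (hmeas _ _)).aemeasurable
        · exact fun m => (Measurable.tsum
            (fun k => (hmeas _ _).mul (hmeas _ _))).aemeasurable
        · exact Measurable.tsum (fun m => Measurable.tsum
            (fun k => (hmeas _ _).mul (hmeas _ _)))
    _ ≤ C + 2 * ∑' m, (D * ∫⁻ ω, diagInd B (ω m) ∂ν) := by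
        gcongr with m
        simp only [sm_markov_iter G B o o ν hν]
        rw [← lintegral_tsum (fun k => (hmeas (fun s => diagInd B s *
            ((pairOp G B)^[k + 1] (diagInd B)) s) m).aemeasurable),
          ← lintegral_const_mul _ (hmeas _ _)]
        refine lintegral_mono (fun ω => ?_)
        simp only
        rw [ENNReal.tsum_mul_left, mul_comm]
        by_cases hx : ∃ x ∈ B, (ω m).1 = some x ∧ (ω m).2 = some x
        · gcongr
          obtain ⟨x, hxB, h2, h3⟩ := hx
          have : ω m = (some x, some x) := Prod.ext h2 h3
          rw [this]
          refine le_trans ?_ (h1 x hxB)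
          exact ENNReal.tsum_comp_le_tsum_of_injective (add_left_injective 1)
            (fun k => ((pairOp G B)^[k] (diagInd B)) (some x, some x))
        · simp [diagInd, hx]
    _ ≤ C + 2 * (D * C) := by
        rw [ENNReal.tsum_mul_left]
        gcongr

/-! ### Killed transition probabilities -/

/-- one-step probabilities inside `B` -/
def sStep (G : SimpleGraph V) [G.LocallyFinite] (B : Set V) (x y : V) : ℝ≥0∞ :=
  killedStep G B (some x) (some y)

/-- `k`-step probabilities inside `B` -/
def pStep (G : SimpleGraph V) [G.LocallyFinite] (B : Set V) : ℕ → V → V → ℝ≥0∞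
  | 0, x, y => if x = y ∧ y ∈ B then 1 else 0
  | k + 1, x, y => ∑' z, sStep G B x z * pStep G B k z y

lemma sStep_def (G : SimpleGraph V) [G.LocallyFinite] (B : Set V) (x y : V) :
    sStep G B x y = if x ∈ B ∧ G.Adj x y ∧ y ∈ B then ((G.degree x : ℝ≥0∞))⁻¹ else 0 := rfl

lemma pStep_zero_of_notMem (G : SimpleGraph V) [G.LocallyFinite] (B : Set V) (k : ℕ) (x y : V)
    (hx : x ∉ B) : pStep G B k x y = 0 := by
  cases k with
  | zero =>
    simp only [pStep]
    rw [if_neg]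
    rintro ⟨rfl, h⟩
    exact hx h
  | succ k => simp [pStep, sStep_def, hx]

lemma pStep_one (G : SimpleGraph V) [G.LocallyFinite] (B : Set V) (x y : V) :
    pStep G B 1 x y = sStep G B x y := by
  simp only [pStep]
  rw [tsum_eq_single y]
  · by_cases hy : y ∈ B <;> simp [sStep_def, hy]
  · intro z hz; simp [hz]

lemma pStep_add (G : SimpleGraph V) [G.LocallyFinite] (B : Set V) (j k : ℕ) (x y : V) :
    pStep G B (j + k) x y = ∑' z, pStep G B j x z * pStep G B k z y := by
  induction j generalizing x with
  | zero =>
    rw [tsum_eq_single x]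
    · by_cases hx : x ∈ B
      · simp [pStep, hx]
      · simp [pStep_zero_of_notMem, hx]
    · intro z hz
      simp [pStep, hz.symm]
  | succ j ih =>
    rw [show j + 1 + k = (j + k) + 1 by omega]
    simp only [pStep, ih, ← ENNReal.tsum_mul_left, ← ENNReal.tsum_mul_right]
    rw [ENNReal.tsum_comm]
    simp only [mul_assoc]

lemma sStep_rev (G : SimpleGraph V) [G.LocallyFinite] (B : Set V)
    (hd : ∀ x, 0 < G.degree x) (x y : V) :
    (G.degree x : ℝ≥0∞) * sStep G B x y = (G.degree y : ℝ≥0∞) * sStep G B y x := by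
  have h1 : ∀ x, (G.degree x : ℝ≥0∞) * (G.degree x : ℝ≥0∞)⁻¹ = 1 := fun x =>
    ENNReal.mul_inv_cancel (by have := hd x; simp; omega) (by simp)
  simp only [sStep_def, mul_ite, mul_zero, h1]
  congr 1
  rw [G.adj_comm x y]
  simp only [eq_iff_iff]; tauto

lemma pStep_rev (G : SimpleGraph V) [G.LocallyFinite] (B : Set V)
    (hd : ∀ x, 0 < G.degree x) (k : ℕ) (x y : V) :
    (G.degree x : ℝ≥0∞) * pStep G B k x y = (G.degree y : ℝ≥0∞) * pStep G B k y x := by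
  induction k generalizing x y with
  | zero =>
    by_cases h : x = y
    · subst h; rfl
    · simp [pStep, h, Ne.symm h]
  | succ k ih =>
    rw [pStep_add G B k 1 y x]
    simp only [pStep_one]
    simp only [pStep, ← ENNReal.tsum_mul_left]
    congr 1 with z
    rw [← mul_assoc, sStep_rev G B hd, mul_right_comm, ih, mul_assoc]

lemma pairOp_iter (G : SimpleGraph V) [G.LocallyFinite] (B : Set V) (k : ℕ) :
    (∀ x x', ((pairOp G B)^[k] (diagInd B)) (some x, some x') =
      ∑' y, pStep G B k x y * pStep G B k x' y) ∧
    (∀ b, ((pairOp G B)^[k] (diagInd B)) (none, b) = 0) ∧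
    (∀ a, ((pairOp G B)^[k] (diagInd B)) (a, none) = 0) := by
  induction k with
  | zero =>
    refine ⟨?_, ?_, ?_⟩
    · intro x x'
      rw [tsum_eq_single x]
      · simp only [Function.iterate_zero, id_eq, diagInd, pStep]
        by_cases h : x' = x
        · subst h; by_cases hx : x' ∈ B <;> simp [hx]
        · simp only [h, false_and, if_false, mul_zero]
          rw [if_neg]
          rintro ⟨z, _, h1, h2⟩
          simp at h1 h2
          exact h (h2.trans h1.symm)
      · intro z hz; simp [pStep, hz.symm]
    · intro b; simp [diagInd]
    · intro b; simp [diagInd]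
  | succ k ih =>
    obtain ⟨ih1, ih2, ih3⟩ := ih
    simp only [Function.iterate_succ_apply']
    generalize ((pairOp G B)^[k] (diagInd B)) = g at ih1 ih2 ih3
    have hs : ∀ a b, pairOp G B g (a, b) =
        ∑' z : V × V, killedStep G B a (some z.1) * killedStep G B b (some z.2) *
          g (some z.1, some z.2) := by
      intro a b
      unfold pairOp
      have hinj : Function.Injective (fun z : V × V => ((some z.1, some z.2) :
          Option V × Option V)) := by
        rintro ⟨a, b⟩ ⟨c, d⟩ h; simpa using h
      rw [← hinj.tsum_eq]
      · rfl
      · rintro ⟨s, t⟩ hst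
        cases s with
        | none => simp [ih2] at hst
        | some s =>
          cases t with
          | none => simp [ih3] at hst
          | some t => exact ⟨(s, t), rfl⟩
    refine ⟨?_, ?_, ?_⟩
    · intro x x'
      rw [hs]
      simp only [ih1, pStep]
      rw [ENNReal.tsum_prod']
      simp only [← ENNReal.tsum_mul_left, ← ENNReal.tsum_mul_right]
      have : ∀ z : V, ∑' (z' : V) (y : V), killedStep G B (some x) (some z) *
          killedStep G B (some x') (some z') * (pStep G B k z y * pStep G B k z' y) =
          ∑' (y : V) (z' : V), killedStep G B (some x) (some z) *
          killedStep G B (some x') (some z') * (pStep G B k z y * pStep G B k z' y) :=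
        fun z => ENNReal.tsum_comm
      simp only [this]
      rw [ENNReal.tsum_comm]
      congr 1 with y
      rw [ENNReal.tsum_comm]
      congr 1 with z
      congr 1 with z'
      simp only [sStep]
      ring
    · intro b; rw [hs]; simp [killedStep]
    · intro b; rw [hs]; simp [killedStep]

lemma sm_green_bound (G : SimpleGraph V) [G.LocallyFinite] (B : Set V)
    (hd : ∀ x, 0 < G.degree x) (hdeg : ∀ x : V, G.degree x ≤ 6) (x : V) (c : ℝ≥0∞)
    (hc : ∑' k, pStep G B k x x ≤ (G.degree x : ℝ≥0∞) * c) :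
    ∑' k, ((pairOp G B)^[k] (diagInd B)) (some x, some x) ≤ 6 * c := by
  have hx0 : (G.degree x : ℝ≥0∞) ≠ 0 := by have := hd x; simp; omega
  have hxt : (G.degree x : ℝ≥0∞) ≠ ⊤ := by simp
  have h1 : (G.degree x : ℝ≥0∞) * ∑' k, ((pairOp G B)^[k] (diagInd B)) (some x, some x) ≤
      (G.degree x : ℝ≥0∞) * (6 * c) := by
    calc _ = ∑' k, ∑' y, (G.degree x : ℝ≥0∞) * (pStep G B k x y * pStep G B k x y) := by
          simp only [(pairOp_iter G B _).1, ENNReal.tsum_mul_left]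
      _ ≤ ∑' k, ∑' y, 6 * (pStep G B k x y * pStep G B k y x) := by
          refine ENNReal.tsum_le_tsum (fun k => ENNReal.tsum_le_tsum (fun y => ?_))
          rw [← mul_assoc, pStep_rev G B hd, mul_assoc, mul_comm (pStep G B k x y)]
          gcongr
          exact_mod_cast hdeg y
      _ = 6 * ∑' k, pStep G B (k + k) x x := by
          simp only [pStep_add G B, ENNReal.tsum_mul_left]
      _ ≤ 6 * ∑' k, pStep G B k x x := by
          refine mul_le_mul_right ?_ 6
          exact ENNReal.tsum_comp_le_tsum_of_injective
            (f := fun k : ℕ => k + k) (fun a b h => by simp at h; omega)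
            (fun k => pStep G B k x x)
      _ ≤ 6 * ((G.degree x : ℝ≥0∞) * c) := by gcongr
      _ = _ := by ring
  exact (ENNReal.mul_le_mul_iff_right hx0 hxt).1 h1

/-- A nonnegative supersolution dominates the Green function. -/
lemma sm_super (G : SimpleGraph V) [G.LocallyFinite] (B : Set V) (x : V) (u : V → ℝ≥0∞)
    (hu : ∀ y ∈ B, (if y = x then 1 else 0) + ∑' z, sStep G B y z * u z ≤ u y) (y : V) :
    ∑' k, pStep G B k y x ≤ u y := by
  rw [ENNReal.tsum_eq_iSup_nat]
  refine iSup_le ?_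
  intro N
  induction N generalizing y with
  | zero => simp
  | succ N ih =>
    by_cases hy : y ∈ B
    · refine le_trans ?_ (hu y hy)
      rw [Finset.sum_range_succ', add_comm]
      refine add_le_add ?_ ?_
      · simp only [pStep]; split_ifs <;> simp_all
      · simp only [pStep]
        rw [← Summable.tsum_finsetSum (fun _ _ => ENNReal.summable)]
        refine ENNReal.tsum_le_tsum (fun z => ?_)
        rw [← Finset.mul_sum]
        gcongr
        exact ih z
    · simp [pStep_zero_of_notMem, hy]

/-! ### Potential theory on a finite set -/

/-- Dirichlet form restricted to a finite set of vertices -/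
def dirE (G : SimpleGraph V) (F' : Finset V) (f h : V → ℝ) : ℝ :=
  (1 / 2) * ∑ y ∈ F', ∑ z ∈ F', if G.Adj y z then (f y - f z) * (h y - h z) else 0

/-- graph Laplacian -/
def lap (G : SimpleGraph V) [G.LocallyFinite] (h : V → ℝ) (y : V) : ℝ :=
  ∑ z ∈ G.neighborFinset y, (h y - h z)

lemma dirE_green (G : SimpleGraph V) [G.LocallyFinite] (F F' : Finset V) (hFF : F ⊆ F')
    (hF' : ∀ y ∈ F, ∀ z, G.Adj y z → z ∈ F') (f h : V → ℝ) (hf : ∀ y, y ∉ F → f y = 0) :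
    dirE G F' f h = ∑ y ∈ F, f y * lap G h y := by
  have h1 : ∑ y ∈ F', ∑ z ∈ F', (if G.Adj y z then (f y - f z) * (h y - h z) else 0) =
      (∑ y ∈ F', ∑ z ∈ F', if G.Adj y z then f y * (h y - h z) else 0) +
      ∑ y ∈ F', ∑ z ∈ F', if G.Adj z y then f z * (h z - h y) else 0 := by
    rw [← Finset.sum_add_distrib]
    refine Finset.sum_congr rfl (fun y _ => ?_)
    rw [← Finset.sum_add_distrib]
    refine Finset.sum_congr rfl (fun z _ => ?_)
    rw [G.adj_comm z y]
    split_ifs <;> ring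
  have h2 : ∑ y ∈ F', ∑ z ∈ F', (if G.Adj z y then f z * (h z - h y) else 0) =
      ∑ y ∈ F', ∑ z ∈ F', if G.Adj y z then f y * (h y - h z) else 0 := Finset.sum_comm
  have h3 : ∑ y ∈ F', ∑ z ∈ F', (if G.Adj y z then f y * (h y - h z) else 0) =
      ∑ y ∈ F, f y * lap G h y := by
    rw [← Finset.sum_subset hFF]
    · refine Finset.sum_congr rfl (fun y hy => ?_)
      rw [lap, Finset.mul_sum, ← Finset.sum_filter]
      refine Finset.sum_congr ?_ (fun _ _ => rfl)
      ext z
      simp only [Finset.mem_filter, SimpleGraph.mem_neighborFinset]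
      exact ⟨fun h => h.2, fun h => ⟨hF' y hy z h, h⟩⟩
    · intro y _ hy
      simp [hf y hy]
  rw [dirE, h1, h2, h3]; ring

lemma dirE_edge (G : SimpleGraph V) (F' : Finset V) (f : V → ℝ) (x y : V) (hx : x ∈ F')
    (hy : y ∈ F') (hxy : G.Adj x y) : (f x - f y) ^ 2 ≤ dirE G F' f f := by
  have hnn : ∀ a b, 0 ≤ (if G.Adj a b then (f a - f b) * (f a - f b) else 0) := by
    intro a b; split_ifs
    · exact mul_self_nonneg _
    · exact le_refl _
  have hrow : ∀ a ∈ F', ∀ b ∈ F', G.Adj a b → (f a - f b) * (f a - f b) ≤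
      ∑ z ∈ F', (if G.Adj a z then (f a - f z) * (f a - f z) else 0) := by
    intro a _ b hb hab
    have := Finset.single_le_sum (f := fun z => if G.Adj a z then (f a - f z) * (f a - f z) else 0)
      (fun z _ => hnn a z) hb
    simpa [hab] using this
  have h2 : ∑ a ∈ ({x, y} : Finset V), ∑ z ∈ F', (if G.Adj a z then (f a - f z) * (f a - f z) else 0)
      ≤ ∑ a ∈ F', ∑ z ∈ F', (if G.Adj a z then (f a - f z) * (f a - f z) else 0) := by
    refine Finset.sum_le_sum_of_subset_of_nonneg ?_ (fun a _ _ => Finset.sum_nonneg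
      (fun z _ => hnn a z))
    intro a ha
    simp only [Finset.mem_insert, Finset.mem_singleton] at ha
    rcases ha with rfl | rfl <;> assumption
  rw [Finset.sum_pair hxy.ne] at h2
  have h3 := hrow x hx y hy hxy
  have h4 := hrow y hy x hx hxy.symm
  unfold dirE
  nlinarith

lemma dirE_posdef (G : SimpleGraph V) (hconn : G.Connected) (hinf : Infinite V)
    (F F' : Finset V) (hFF : F ⊆ F')
    (hF' : ∀ y ∈ F, ∀ z, G.Adj y z → z ∈ F') (f : V → ℝ) (hf : ∀ y, y ∉ F → f y = 0)
    (h0 : dirE G F' f f ≤ 0) (x : V) : f x = 0 := by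
  have hedge : ∀ y ∈ F, ∀ z, G.Adj y z → f y = f z := by
    intro y hy z hyz
    have h1 := dirE_edge G F' f y z (hFF hy) (hF' y hy z hyz) hyz
    have h2 : (f y - f z) ^ 2 = 0 := le_antisymm (h1.trans h0) (sq_nonneg _)
    have := pow_eq_zero_iff (two_ne_zero) |>.1 h2
    linarith
  have hadj : ∀ y z, G.Adj y z → f y = f z := by
    intro y z hyz
    by_cases hy : y ∈ F
    · exact hedge y hy z hyz
    · by_cases hz : z ∈ F
      · exact (hedge z hz y hyz.symm).symm
      · rw [hf y hy, hf z hz]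
  have hwalk : ∀ (u v : V) (p : G.Walk u v), f u = f v := by
    intro u v p
    induction p with
    | nil => rfl
    | cons h _ ih => exact (hadj _ _ h).trans ih
  obtain ⟨v, hv⟩ := Infinite.exists_notMem_finset F
  obtain ⟨p⟩ := hconn.preconnected x v
  rw [hwalk x v p, hf v hv]

lemma green_exists (G : SimpleGraph V) [G.LocallyFinite] (hconn : G.Connected) (hinf : Infinite V)
    (F F' : Finset V) (hFF : F ⊆ F')
    (hF' : ∀ y ∈ F, ∀ z, G.Adj y z → z ∈ F') (x : V) :
    ∃ g : V → ℝ, (∀ y, y ∉ F → g y = 0) ∧ ∀ y ∈ F, lap G g y = if y = x then 1 else 0 := by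
  let ext : (F → ℝ) → V → ℝ := fun f v => if h : v ∈ F then f ⟨v, h⟩ else 0
  have hext0 : ∀ f y, y ∉ F → ext f y = 0 := fun f y hy => by simp [ext, hy]
  have hext : ∀ f (y : F), ext f y = f y := fun f y => by simp [ext]
  let T : (F → ℝ) →ₗ[ℝ] (F → ℝ) :=
    { toFun := fun f y => lap G (ext f) y
      map_add' := by
        intro f g
        funext y
        simp only [lap, Pi.add_apply, ← Finset.sum_add_distrib]
        refine Finset.sum_congr rfl (fun z _ => ?_)
        simp only [ext]
        split_ifs <;> simp <;> ring
      map_smul' := by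
        intro c f
        funext y
        simp only [lap, Pi.smul_apply, smul_eq_mul, Finset.mul_sum, RingHom.id_apply]
        refine Finset.sum_congr rfl (fun z _ => ?_)
        simp only [ext]
        split_ifs <;> simp <;> ring }
  have hinj : Function.Injective T := by
    rw [← LinearMap.ker_eq_bot, LinearMap.ker_eq_bot']
    intro f hf
    have h1 : dirE G F' (ext f) (ext f) = 0 := by
      rw [dirE_green G F F' hFF hF' _ _ (hext0 f)]
      refine Finset.sum_eq_zero (fun y hy => ?_)
      have : lap G (ext f) y = 0 := congrFun hf ⟨y, hy⟩
      rw [this, mul_zero]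
    funext y
    rw [← hext f y]
    exact dirE_posdef G hconn hinf F F' hFF hF' _ (hext0 f) h1.le y
  obtain ⟨g, hg⟩ := (LinearMap.injective_iff_surjective.1 hinj)
    (fun y => if (y : V) = x then 1 else 0)
  exact ⟨ext g, hext0 g, fun y hy => congrFun hg ⟨y, hy⟩⟩

lemma dirE_repr (G : SimpleGraph V) [G.LocallyFinite] (F F' : Finset V) (hFF : F ⊆ F')
    (hF' : ∀ y ∈ F, ∀ z, G.Adj y z → z ∈ F') (x : V) (hx : x ∈ F) (g f : V → ℝ)
    (hg : ∀ y ∈ F, lap G g y = if y = x then 1 else 0)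
    (hf : ∀ y, y ∉ F → f y = 0) : dirE G F' f g = f x := by
  rw [dirE_green G F F' hFF hF' f g hf, Finset.sum_congr rfl (fun y hy => by rw [hg y hy])]
  simp [hx]

lemma dirE_comm (G : SimpleGraph V) (F' : Finset V) (f h : V → ℝ) :
    dirE G F' f h = dirE G F' h f := by
  simp only [dirE, mul_comm (f _ - f _)]

/-- truncation principle -/
lemma dirE_trunc (G : SimpleGraph V) (F' : Finset V) (f g : V → ℝ)
    (h : ∀ y z, (f y - f z) * (f y - f z) ≤ (f y - f z) * (g y - g z)) :
    dirE G F' f f ≤ dirE G F' f g := by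
  unfold dirE
  gcongr with y _ z _
  split_ifs
  · exact h y z
  · exact le_refl _

lemma green_nonneg (G : SimpleGraph V) [G.LocallyFinite] (hconn : G.Connected)
    (hinf : Infinite V) (F F' : Finset V) (hFF : F ⊆ F')
    (hF' : ∀ y ∈ F, ∀ z, G.Adj y z → z ∈ F') (x : V) (hx : x ∈ F) (g : V → ℝ)
    (hg0 : ∀ y, y ∉ F → g y = 0)
    (hg : ∀ y ∈ F, lap G g y = if y = x then 1 else 0) (y : V) : 0 ≤ g y := by
  have h0 : ∀ y, y ∉ F → min (g y) 0 = 0 := fun y hy => by simp [hg0 y hy]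
  have h1 := dirE_trunc G F' (fun y => min (g y) 0) g (by
    intro y z
    rcases le_total (g y) 0 with h1 | h1 <;> rcases le_total (g z) 0 with h2 | h2 <;>
      simp only [h1, h2, min_eq_left, min_eq_right] <;> nlinarith)
  rw [dirE_repr G F F' hFF hF' x hx g (fun y => min (g y) 0) hg h0] at h1
  have h2 := dirE_posdef G hconn hinf F F' hFF hF' (fun y => min (g y) 0) h0
    (h1.trans (min_le_right _ _)) y
  exact min_eq_right_iff.1 h2

lemma green_max (G : SimpleGraph V) [G.LocallyFinite] (hconn : G.Connected)
    (hinf : Infinite V) (F F' : Finset V) (hFF : F ⊆ F')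
    (hF' : ∀ y ∈ F, ∀ z, G.Adj y z → z ∈ F') (x : V) (hx : x ∈ F) (g : V → ℝ)
    (hg0 : ∀ y, y ∉ F → g y = 0)
    (hg : ∀ y ∈ F, lap G g y = if y = x then 1 else 0) (y : V) : g y ≤ g x := by
  have hnn := green_nonneg G hconn hinf F F' hFF hF' x hx g hg0 hg
  have h0 : ∀ y, y ∉ F → max (g y - g x) 0 = 0 := fun y hy => by simp [hg0 y hy, hnn x]
  have h1 := dirE_trunc G F' (fun y => max (g y - g x) 0) g (by
    intro y z
    rcases le_total (g y - g x) 0 with h1 | h1 <;> rcases le_total (g z - g x) 0 with h2 | h2 <;>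
      simp only [h1, h2, max_eq_left, max_eq_right] <;> nlinarith)
  rw [dirE_repr G F F' hFF hF' x hx g (fun y => max (g y - g x) 0) hg h0] at h1
  have h2 := dirE_posdef G hconn hinf F F' hFF hF' (fun y => max (g y - g x) 0) h0
    (h1.trans (by simp)) y
  have := max_eq_right_iff.1 h2
  linarith

lemma green_adj (G : SimpleGraph V) [G.LocallyFinite] (hconn : G.Connected)
    (hinf : Infinite V) (F F' : Finset V) (hFF : F ⊆ F')
    (hF' : ∀ y ∈ F, ∀ z, G.Adj y z → z ∈ F') (g : V → V → ℝ)
    (hg0 : ∀ x y, y ∉ F → g x y = 0)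
    (hg : ∀ x, ∀ y ∈ F, lap G (g x) y = if y = x then 1 else 0)
    (x y : V) (hx : x ∈ F) (hy : y ∈ F) (hxy : G.Adj y x) : g x x ≤ g y y + 1 := by
  have hsym : g x y = g y x := by
    rw [← dirE_repr G F F' hFF hF' y hy (g y) (g x) (hg y) (hg0 x), dirE_comm,
      dirE_repr G F F' hFF hF' x hx (g x) (g y) (hg x) (hg0 y)]
  have hmax := green_max G hconn hinf F F' hFF hF' y hy (g y) (hg0 y) (hg y) x
  have hh0 : ∀ z, z ∉ F → g x z - g y z = 0 := fun z hz => by rw [hg0 x z hz, hg0 y z hz, sub_zero]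
  have hE : dirE G F' (fun z => g x z - g y z) (fun z => g x z - g y z) =
      (g x x - g y x) - (g x y - g y y) := by
    rw [← dirE_repr G F F' hFF hF' x hx (g x) (fun z => g x z - g y z) (hg x) hh0,
      ← dirE_repr G F F' hFF hF' y hy (g y) (fun z => g x z - g y z) (hg y) hh0]
    simp only [dirE]
    rw [← mul_sub, ← Finset.sum_sub_distrib]
    congr 1
    refine Finset.sum_congr rfl (fun a _ => ?_)
    rw [← Finset.sum_sub_distrib]
    refine Finset.sum_congr rfl (fun b _ => ?_)
    split_ifs <;> ring
  have he := dirE_edge G F' (fun z => g x z - g y z) y x (hFF hy) (hFF hx) hxy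
  rw [hE] at he
  nlinarith

lemma energy_eq (G : SimpleGraph V) (F F' : Finset V) (hFF : F ⊆ F')
    (hF' : ∀ y ∈ F, ∀ z, G.Adj y z → z ∈ F') (f : V → ℝ) (hf : ∀ y, y ∉ F → f y = 0) :
    energy G f = ENNReal.ofReal (dirE G F' f f) := by
  unfold energy
  rw [tsum_eq_sum (s := F' ×ˢ F')]
  · rw [dirE, ENNReal.ofReal_mul (by norm_num), ENNReal.ofReal_sum_of_nonneg, Finset.sum_product]
    · congr 1
      · rw [ENNReal.ofReal_div_of_pos (by norm_num)]; simp
      · refine Finset.sum_congr rfl (fun y _ => ?_)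
        rw [ENNReal.ofReal_sum_of_nonneg]
        · refine Finset.sum_congr rfl (fun z _ => ?_)
          simp only
          split_ifs
          · rw [sq]
          · simp
        · intro z _; split_ifs
          · exact mul_self_nonneg _
          · exact le_refl _
    · intro y _
      refine Finset.sum_nonneg (fun z _ => ?_)
      split_ifs
      · exact mul_self_nonneg _
      · exact le_refl _
  · rintro ⟨y, z⟩ hp
    simp only
    split_ifs with hadj
    · have hy : y ∉ F := fun h => hp (Finset.mk_mem_product (hFF h) (hF' y h z hadj))
      have hz : z ∉ F := fun h => hp (Finset.mk_mem_product (hF' z h y hadj.symm) (hFF h))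
      simp [hf y hy, hf z hz]
    · rfl

lemma green_le_res (G : SimpleGraph V) [G.LocallyFinite] (hconn : G.Connected)
    (hinf : Infinite V) (F F' : Finset V) (hFF : F ⊆ F')
    (hF' : ∀ y ∈ F, ∀ z, G.Adj y z → z ∈ F') (x : V) (hx : x ∈ F) (g : V → ℝ)
    (hg0 : ∀ y, y ∉ F → g y = 0)
    (hg : ∀ y ∈ F, lap G g y = if y = x then 1 else 0) (r : ℕ)
    (hup : effRes G {x} ((F : Set V))ᶜ ≤ (r : ℝ≥0∞)) : g x ≤ r := by
  rcases (green_nonneg G hconn hinf F F' hFF hF' x hx g hg0 hg x).eq_or_lt with h | hpos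
  · rw [← h]; exact Nat.cast_nonneg r
  have hf0 : ∀ y, y ∉ F → (g x)⁻¹ * g y = 0 := fun y hy => by rw [hg0 y hy, mul_zero]
  have hE : energy G (fun y => (g x)⁻¹ * g y) = ENNReal.ofReal ((g x)⁻¹) := by
    rw [energy_eq G F F' hFF hF' _ hf0]
    congr 1
    have h1 := dirE_repr G F F' hFF hF' x hx g (fun y => (g x)⁻¹ * g y) hg hf0
    have h2 : dirE G F' (fun y => (g x)⁻¹ * g y) (fun y => (g x)⁻¹ * g y) =
        (g x)⁻¹ * dirE G F' (fun y => (g x)⁻¹ * g y) g := by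
      simp only [dirE, Finset.mul_sum]
      refine Finset.sum_congr rfl (fun a _ => Finset.sum_congr rfl (fun b _ => ?_))
      split_ifs <;> ring
    rw [h2, h1]
    field_simp
  have h1 : (energy G (fun y => (g x)⁻¹ * g y))⁻¹ ≤ effRes G {x} ((F : Set V))ᶜ := by
    unfold effRes
    rw [ENNReal.inv_le_inv]
    refine iInf₂_le _ ⟨by rw [hE]; exact ENNReal.ofReal_ne_top, ?_, ?_⟩
    · intro y hy
      rw [Set.mem_singleton_iff.1 hy]
      field_simp
    · intro y hy
      exact hf0 y (by simpa using hy)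
  have h2 := h1.trans hup
  rw [hE, ENNReal.ofReal_inv_of_pos hpos, inv_inv] at h2
  rw [ENNReal.ofReal_le_natCast] at h2
  exact h2

lemma green_sum (G : SimpleGraph V) [G.LocallyFinite] (hd : ∀ x, 0 < G.degree x)
    (F : Finset V) (x : V) (g : V → ℝ) (hnn : ∀ y, 0 ≤ g y)
    (hg0 : ∀ y, y ∉ F → g y = 0)
    (hg : ∀ y ∈ F, lap G g y = if y = x then 1 else 0) :
    ∑' k, pStep G (F : Set V) k x x ≤ (G.degree x : ℝ≥0∞) * ENNReal.ofReal (g x) := by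
  refine sm_super G (F : Set V) x
    (fun y => (G.degree x : ℝ≥0∞) * ENNReal.ofReal (g y)) ?_ x
  intro y hy
  have hyF : y ∈ F := by simpa using hy
  have hdy : (0 : ℝ) < G.degree y := by exact_mod_cast hd y
  have hsum : ∑' z, sStep G (F : Set V) y z * ((G.degree x : ℝ≥0∞) * ENNReal.ofReal (g z)) =
      ENNReal.ofReal (∑ z ∈ G.neighborFinset y, (G.degree y : ℝ)⁻¹ * (G.degree x * g z)) := by
    rw [tsum_eq_sum (s := G.neighborFinset y),
      ENNReal.ofReal_sum_of_nonneg (fun z _ => by have := hnn z; positivity)]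
    · refine Finset.sum_congr rfl (fun z hz => ?_)
      have hz' : G.Adj y z := by simpa using hz
      by_cases hzF : z ∈ F
      · rw [sStep_def, if_pos ⟨hy, hz', by simpa using hzF⟩, ENNReal.ofReal_mul (by positivity),
          ENNReal.ofReal_mul (by positivity), ENNReal.ofReal_inv_of_pos hdy,
          ENNReal.ofReal_natCast, ENNReal.ofReal_natCast]
      · simp [hg0 z hzF]
    · intro z hz
      have hz' : ¬ G.Adj y z := by simpa using hz
      simp [sStep_def, hz']
  have hlap : (G.degree y : ℝ) * g y - ∑ z ∈ G.neighborFinset y, g z = if y = x then 1 else 0 := by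
    rw [← hg y hyF, lap, Finset.sum_sub_distrib]; simp
  rw [hsum, ← Finset.mul_sum, ← Finset.mul_sum]
  have hs0 : 0 ≤ ∑ z ∈ G.neighborFinset y, g z := Finset.sum_nonneg (fun z _ => hnn z)
  have e1 : (if y = x then (1 : ℝ≥0∞) else 0) = ENNReal.ofReal (if y = x then 1 else 0) := by
    split_ifs <;> simp
  have e2 : (G.degree x : ℝ≥0∞) * ENNReal.ofReal (g y) = ENNReal.ofReal (G.degree x * g y) := by
    rw [ENNReal.ofReal_mul (by positivity), ENNReal.ofReal_natCast]
  rw [e1, e2, ← ENNReal.ofReal_add (by split_ifs <;> norm_num) (by positivity)]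
  apply ENNReal.ofReal_le_ofReal
  apply le_of_eq
  by_cases hxy : y = x
  · subst hxy
    simp only [if_true] at hlap ⊢
    field_simp
    linarith
  · simp only [hxy, if_false] at hlap ⊢
    field_simp
    have : (∑ z ∈ G.neighborFinset y, g z) = (G.degree y : ℝ) * g y := by linarith
    rw [this]; ring

/-- If every vertex of `G` has degree at most `6` and
`R_eff(0, V∖B_r) ≤ r`, then the number of collisions of two independent simple
random walks on `G` killed upon exiting the graph-metric ball `B_r`, both
started at `0`, satisfies `E₀₀(Z_{B_r}²) ≤ 144r² + 6r`. -/
theorem second_moment_bound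
    (G : SimpleGraph V) [G.LocallyFinite] (hconn : G.Connected) (hinf : Infinite V)
    (o : V) (hdeg : ∀ x : V, G.degree x ≤ 6)
    (r : ℕ) (hr : 1 ≤ r)
    (Br : Set V) (hBr : Br = {x : V | G.dist o x ≤ r})
    (hup : effRes G {o} Brᶜ ≤ (r : ℝ≥0∞))
    (ν : Measure (ℕ → Option V × Option V)) (hν : IsKilledPairLaw G Br o o ν) :
    ∫⁻ ω, (collisions Br ω) ^ 2 ∂ν ≤ 144 * r ^ 2 + 6 * r := by
  have hfin : Br.Finite := by rw [hBr]; exact sm_ball_finite G hconn o r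
  have : Countable V := sm_countable G hconn o
  have hd := sm_degree_pos G hconn hinf
  obtain ⟨F, rfl⟩ := hfin.exists_finset_coe
  have hmem : ∀ x, x ∈ F ↔ G.dist o x ≤ r := by
    intro x
    rw [← Finset.mem_coe, hBr]; rfl
  have hoF : o ∈ F := by rw [hmem]; simp
  let F' : Finset V := F ∪ F.biUnion (fun y => G.neighborFinset y)
  have hFF : F ⊆ F' := Finset.subset_union_left
  have hF' : ∀ y ∈ F, ∀ z, G.Adj y z → z ∈ F' := by
    intro y hy z hyz
    refine Finset.mem_union_right _ (Finset.mem_biUnion.2 ⟨y, hy, ?_⟩)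
    simpa using hyz
  choose g hg0 hg using green_exists G hconn hinf F F' hFF hF'
  have ho : g o o ≤ r := green_le_res G hconn hinf F F' hFF hF' o hoF (g o) (hg0 o) (hg o) r hup
  have hx : ∀ n x, G.dist o x = n → n ≤ r → g x x ≤ r + n := by
    intro n
    induction n with
    | zero =>
      intro x hx _
      have : o = x := (hconn.dist_eq_zero_iff).1 hx
      subst this
      simpa using ho
    | succ n ih =>
      intro x hx hn
      obtain ⟨y, hyx, hy⟩ := sm_exists_pred G hconn o x n hx
      have h1 := ih y hy (by omega)
      have h2 := green_adj G hconn hinf F F' hFF hF' g hg0 hg x y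
        (by rw [hmem]; omega) (by rw [hmem]; omega) hyx
      push_cast
      linarith
  have hcol : ∀ x ∈ F, ∑' k, ((pairOp G (F : Set V))^[k] (diagInd (F : Set V))) (some x, some x) ≤
      6 * ENNReal.ofReal (g x x) := by
    intro x hxF
    refine sm_green_bound G (F : Set V) hd hdeg x _ ?_
    exact green_sum G hd F x (g x)
      (green_nonneg G hconn hinf F F' hFF hF' x hxF (g x) (hg0 x) (hg x)) (hg0 x) (hg x)
  have hC : ∑' k, ((pairOp G (F : Set V))^[k] (diagInd (F : Set V))) (some o, some o) ≤
      6 * (r : ℝ≥0∞) := by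
    refine (hcol o hoF).trans ?_
    gcongr
    exact ENNReal.ofReal_le_natCast.2 ho
  have hD : ∀ x ∈ (F : Set V),
      ∑' k, ((pairOp G (F : Set V))^[k] (diagInd (F : Set V))) (some x, some x) ≤
      6 * ((2 * r : ℕ) : ℝ≥0∞) := by
    intro x hxF
    have hxF' : x ∈ F := by simpa using hxF
    refine (hcol x hxF').trans ?_
    gcongr
    rw [ENNReal.ofReal_le_natCast]
    have hle := (hmem x).1 hxF'
    have h1 := hx _ x rfl hle
    have h2 : (G.dist o x : ℝ) ≤ r := by exact_mod_cast hle
    push_cast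
    linarith
  refine (sm_second_moment G (F : Set V) o ν hν _ _ hC hD).trans (le_of_eq ?_)
  push_cast
  ring

end
end

section
/- Suppose every vertex of G has degree at most 6 and that there exists ε > 0 such that for every integer r ≥ 1 the ball B_r = {x ∈ V : d_G(0,x) ≤ r} satisfies 12εr ≤ R_eff(0, V∖B_r) ≤ r. Then two independent (unkilled) simple random walks X and Y on G, both started at 0, collide infinitely often with probability at least ε²/12; that is, P_{0,0}(Σ_{n≥0} 1(X_n = Y_n) = ∞) ≥ ε²/12. -/
open MeasureTheory ENNReal
open scoped Classical

noncomputable section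

variable {V : Type*}

/-- One-step transition probabilities of the simple random walk on `G`. -/
def srwStep (G : SimpleGraph V) [G.LocallyFinite] (x y : V) : ℝ≥0∞ :=
  if G.Adj x y then ((G.degree x : ℝ≥0∞))⁻¹ else 0

/-- Probability that the simple random walk started at `a` follows `w` for its
first `n` steps. -/
def srwCylProb (G : SimpleGraph V) [G.LocallyFinite] (a : V)
    {n : ℕ} (w : Fin (n + 1) → V) : ℝ≥0∞ :=
  (if w 0 = a then 1 else 0) * ∏ i : Fin n, srwStep G (w i.castSucc) (w i.succ)

/-- `ν` is the joint law of two independent simple random walks on `G` started at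
`a` and `b`: a probability measure on pairs of trajectories with the correct
finite-dimensional distributions. -/
def IsSRWPairLaw [MeasurableSpace V] (G : SimpleGraph V) [G.LocallyFinite]
    (a b : V) (ν : Measure (ℕ → V × V)) : Prop :=
  IsProbabilityMeasure ν ∧
    ∀ (n : ℕ) (w : Fin (n + 1) → V × V),
      ν {ω | ∀ i : Fin (n + 1), ω i = w i} =
        srwCylProb G a (fun i => (w i).1) * srwCylProb G b (fun i => (w i).2)

/-! ### Killed transition probabilities -/

/-- Real-valued one step transition probability. -/
def icP (G : SimpleGraph V) [G.LocallyFinite] (x y : V) : ℝ :=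
  if G.Adj x y then ((G.degree x : ℝ))⁻¹ else 0

/-- Transition probabilities of the walk killed on leaving `B`. -/
def icQ (G : SimpleGraph V) [G.LocallyFinite] (B : Finset V) : ℕ → V → V → ℝ
  | 0, x, y => if x = y then 1 else 0
  | n + 1, x, y => ∑ z ∈ B, icP G x z * icQ G B n z y

lemma icP_nonneg (G : SimpleGraph V) [G.LocallyFinite] (x y : V) : 0 ≤ icP G x y := by
  unfold icP; split_ifs <;> positivity

lemma icQ_nonneg (G : SimpleGraph V) [G.LocallyFinite] (B : Finset V) (n : ℕ) :
    ∀ x y : V, 0 ≤ icQ G B n x y := by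
  induction n with
  | zero => intro x y; unfold icQ; split_ifs <;> norm_num
  | succ n ih =>
    intro x y
    unfold icQ
    exact Finset.sum_nonneg fun z _ => mul_nonneg (icP_nonneg G x z) (ih z y)

lemma icQ_off (G : SimpleGraph V) [G.LocallyFinite] (B : Finset V) (n : ℕ) :
    ∀ x ∈ B, ∀ y ∉ B, icQ G B n x y = 0 := by
  induction n with
  | zero =>
    intro x hx y hy
    have : x ≠ y := by rintro rfl; exact hy hx
    simp [icQ, this]
  | succ n ih =>
    intro x hx y hy
    unfold icQ
    exact Finset.sum_eq_zero fun z hz => by rw [ih z hz y hy, mul_zero]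

lemma icQ_add (G : SimpleGraph V) [G.LocallyFinite] (B : Finset V) (m n : ℕ) :
    ∀ x ∈ B, ∀ y, icQ G B (m + n) x y = ∑ z ∈ B, icQ G B m x z * icQ G B n z y := by
  induction m with
  | zero =>
    intro x hx y
    simp [icQ, hx]
  | succ m ih =>
    intro x hx y
    have : m + 1 + n = (m + n) + 1 := by ring
    rw [this]
    simp only [icQ]
    simp_rw [Finset.sum_mul]
    rw [Finset.sum_comm]
    refine Finset.sum_congr rfl fun z hz => ?_
    rw [ih z hz y, Finset.mul_sum]
    exact Finset.sum_congr rfl fun w _ => by ring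

lemma icQ_one (G : SimpleGraph V) [G.LocallyFinite] (B : Finset V) (x y : V) (hy : y ∈ B) :
    icQ G B 1 x y = icP G x y := by
  simp [icQ, hy]

lemma icQ_succ' (G : SimpleGraph V) [G.LocallyFinite] (B : Finset V) (n : ℕ)
    (x : V) (hx : x ∈ B) (y : V) (hy : y ∈ B) :
    icQ G B (n + 1) x y = ∑ z ∈ B, icQ G B n x z * icP G z y := by
  rw [icQ_add G B n 1 x hx y]
  exact Finset.sum_congr rfl fun z _ => by rw [icQ_one G B z y hy]

lemma ic_deg_P (G : SimpleGraph V) [G.LocallyFinite] (hpos : ∀ x, 0 < G.degree x) (x y : V) :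
    (G.degree x : ℝ) * icP G x y = if G.Adj x y then 1 else 0 := by
  have : (G.degree x : ℝ) ≠ 0 := by exact_mod_cast (hpos x).ne'
  unfold icP; split_ifs <;> simp [this]

lemma icP_rev (G : SimpleGraph V) [G.LocallyFinite] (hpos : ∀ x, 0 < G.degree x) (x y : V) :
    (G.degree x : ℝ) * icP G x y = G.degree y * icP G y x := by
  rw [ic_deg_P G hpos, ic_deg_P G hpos, G.adj_comm]

lemma icQ_rev (G : SimpleGraph V) [G.LocallyFinite] (hpos : ∀ x, 0 < G.degree x)
    (B : Finset V) (n : ℕ) :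
    ∀ x ∈ B, ∀ y ∈ B, (G.degree x : ℝ) * icQ G B n x y = G.degree y * icQ G B n y x := by
  induction n with
  | zero =>
    intro x hx y hy
    by_cases h : x = y
    · subst h; rfl
    · simp [icQ, h, Ne.symm h]
  | succ n ih =>
    intro x hx y hy
    rw [icQ_succ' G B n y hy x hx]
    simp only [icQ]
    rw [Finset.mul_sum, Finset.mul_sum]
    refine Finset.sum_congr rfl fun z hz => ?_
    rw [← mul_assoc, icP_rev G hpos x z, ← mul_assoc, ← ih z hz y hy]
    ring

/-- Diagonal killed probabilities. -/
lemma icQ_diag (G : SimpleGraph V) [G.LocallyFinite] (hpos : ∀ x, 0 < G.degree x)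
    (B : Finset V) (m n : ℕ) (x : V) (hx : x ∈ B) :
    icQ G B (m + n) x x / G.degree x =
      ∑ y ∈ B, icQ G B m x y * icQ G B n x y / G.degree y := by
  rw [icQ_add G B m n x hx x, Finset.sum_div]
  refine Finset.sum_congr rfl fun y hy => ?_
  have h := icQ_rev G hpos B n x hx y hy
  have h1 : (G.degree x : ℝ) ≠ 0 := by exact_mod_cast (hpos x).ne'
  have h2 : (G.degree y : ℝ) ≠ 0 := by exact_mod_cast (hpos y).ne'
  rw [div_eq_div_iff h1 h2]
  linear_combination (-icQ G B m x y) * h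

/-- Truncated Green function. -/
def icU (G : SimpleGraph V) [G.LocallyFinite] (B : Finset V) (N : ℕ) (x y : V) : ℝ :=
  ∑ n ∈ Finset.range N, icQ G B n x y / G.degree y

lemma icU_nonneg (G : SimpleGraph V) [G.LocallyFinite] (B : Finset V) (N : ℕ) (x y : V) :
    0 ≤ icU G B N x y :=
  Finset.sum_nonneg fun n _ => div_nonneg (icQ_nonneg G B n x y) (by positivity)

lemma icU_off (G : SimpleGraph V) [G.LocallyFinite] (B : Finset V) (N : ℕ) (x : V) (hx : x ∈ B)
    (y : V) (hy : y ∉ B) : icU G B N x y = 0 :=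
  Finset.sum_eq_zero fun n _ => by rw [icQ_off G B n x hx y hy, zero_div]

/-- Adjacency indicator. -/
def icA (G : SimpleGraph V) (x y : V) : ℝ := if G.Adj x y then 1 else 0

lemma icA_comm (G : SimpleGraph V) (x y : V) : icA G x y = icA G y x := by
  unfold icA; rw [G.adj_comm]

lemma icA_nonneg (G : SimpleGraph V) (x y : V) : 0 ≤ icA G x y := by
  unfold icA; split_ifs <;> norm_num

lemma icU_lap (G : SimpleGraph V) [G.LocallyFinite] (hpos : ∀ x, 0 < G.degree x)
    (B : Finset V) (N : ℕ) (x : V) (hx : x ∈ B) (a : V) (ha : a ∈ B) :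
    G.degree a * icU G B N x a - ∑ b ∈ B, icA G a b * icU G B N x b =
      (if x = a then 1 else 0) - icQ G B N x a := by
  have h2 : ∀ y, (G.degree y : ℝ) ≠ 0 := fun y => by exact_mod_cast (hpos y).ne'
  induction N with
  | zero => simp [icU, icQ]
  | succ N ih =>
    have hs : ∀ y, icU G B (N + 1) x y = icU G B N x y + icQ G B N x y / G.degree y := by
      intro y; simp [icU, Finset.sum_range_succ]
    simp only [hs]
    rw [icQ_succ' G B N x hx a ha]
    have e1 : ∑ b ∈ B, icA G a b * (icU G B N x b + icQ G B N x b / G.degree b)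
        = ∑ b ∈ B, icA G a b * icU G B N x b + ∑ z ∈ B, icQ G B N x z * icP G z a := by
      rw [← Finset.sum_add_distrib]
      refine Finset.sum_congr rfl fun b _ => ?_
      have := ic_deg_P G hpos b a
      rw [show icA G a b = G.degree b * icP G b a from by
        rw [this, icA_comm]; rfl]
      field_simp [h2 b]
    rw [e1, mul_add, mul_div_cancel₀ _ (h2 a)]
    linarith

/-- Finite Dirichlet form. -/
def icE (G : SimpleGraph V) (W : Finset V) (f g : V → ℝ) : ℝ :=
  (1 / 2) * ∑ p ∈ W ×ˢ W, icA G p.1 p.2 * ((f p.1 - f p.2) * (g p.1 - g p.2))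

lemma ic_deg_sum (G : SimpleGraph V) [G.LocallyFinite] (W : Finset V) (a : V)
    (h : ∀ b, G.Adj a b → b ∈ W) : ∑ b ∈ W, icA G a b = G.degree a := by
  unfold icA
  rw [Finset.sum_boole]
  congr 1
  rw [← G.card_neighborFinset_eq_degree]
  congr 1
  ext b
  simp only [Finset.mem_filter, SimpleGraph.mem_neighborFinset]
  exact ⟨fun h => h.2, fun hb => ⟨h b hb, hb⟩⟩

lemma icE_parts (G : SimpleGraph V) [G.LocallyFinite] (B W : Finset V) (hBW : B ⊆ W)
    (hW : ∀ a ∈ B, ∀ b, G.Adj a b → b ∈ W) (f g : V → ℝ)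
    (hf : ∀ a ∉ B, f a = 0) (hg : ∀ a ∉ B, g a = 0) :
    icE G W f g = ∑ a ∈ B, f a * (G.degree a * g a - ∑ b ∈ B, icA G a b * g b) := by
  unfold icE
  rw [Finset.sum_product]
  have h1 : ∑ a ∈ W, ∑ b ∈ W, icA G a b * ((f a - f b) * (g a - g b)) =
      ∑ a ∈ W, ∑ b ∈ W, icA G a b * (f a * (g a - g b)) +
      ∑ a ∈ W, ∑ b ∈ W, icA G a b * (f b * (g b - g a)) := by
    simp_rw [← Finset.sum_add_distrib]
    refine Finset.sum_congr rfl fun a _ => Finset.sum_congr rfl fun b _ => by ring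
  have h2 : ∑ a ∈ W, ∑ b ∈ W, icA G a b * (f b * (g b - g a)) =
      ∑ a ∈ W, ∑ b ∈ W, icA G a b * (f a * (g a - g b)) := by
    rw [Finset.sum_comm]
    refine Finset.sum_congr rfl fun a _ => Finset.sum_congr rfl fun b _ => by rw [icA_comm]
  have h3 : ∑ a ∈ W, ∑ b ∈ W, icA G a b * (f a * (g a - g b)) =
      ∑ a ∈ B, f a * (G.degree a * g a - ∑ b ∈ B, icA G a b * g b) := by
    symm
    rw [← Finset.sum_subset hBW (f := fun a => ∑ b ∈ W, icA G a b * (f a * (g a - g b)))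
      (fun a _ ha => Finset.sum_eq_zero fun b _ => by rw [hf a ha]; ring)]
    refine Finset.sum_congr rfl fun a ha => ?_
    rw [← ic_deg_sum G W a (hW a ha)]
    rw [Finset.sum_subset hBW (f := fun b => icA G a b * g b)
      (fun b _ hb => by rw [hg b hb, mul_zero])]
    rw [Finset.sum_mul, ← Finset.sum_sub_distrib, Finset.mul_sum]
    refine Finset.sum_congr rfl fun b _ => by ring
  rw [h1, h2, h3]; ring

lemma icE_U (G : SimpleGraph V) [G.LocallyFinite] (hpos : ∀ x, 0 < G.degree x)
    (B W : Finset V) (hBW : B ⊆ W)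
    (hW : ∀ a ∈ B, ∀ b, G.Adj a b → b ∈ W) (N : ℕ) (x : V) (hx : x ∈ B) (f : V → ℝ)
    (hf : ∀ a ∉ B, f a = 0) :
    icE G W f (icU G B N x) = f x - ∑ a ∈ B, f a * icQ G B N x a := by
  rw [icE_parts G B W hBW hW f _ hf (fun a ha => icU_off G B N x hx a ha)]
  rw [Finset.sum_congr rfl fun a ha => by rw [icU_lap G hpos B N x hx a ha]]
  simp only [mul_sub, Finset.sum_sub_distrib]
  simp [hx]

lemma icE_UU (G : SimpleGraph V) [G.LocallyFinite] (hpos : ∀ x, 0 < G.degree x)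
    (B W : Finset V) (hBW : B ⊆ W)
    (hW : ∀ a ∈ B, ∀ b, G.Adj a b → b ∈ W) (N : ℕ) (x : V) (hx : x ∈ B) :
    icE G W (icU G B N x) (icU G B N x) ≤ icU G B N x x := by
  rw [icE_U G hpos B W hBW hW N x hx _ (fun a ha => icU_off G B N x hx a ha)]
  have : 0 ≤ ∑ a ∈ B, icU G B N x a * icQ G B N x a :=
    Finset.sum_nonneg fun a _ => mul_nonneg (icU_nonneg G B N x a) (icQ_nonneg G B N x a)
  linarith

lemma icE_cs (G : SimpleGraph V) (W : Finset V) (f g : V → ℝ) :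
    (icE G W f g) ^ 2 ≤ icE G W f f * icE G W g g := by
  unfold icE
  have := Finset.sum_sq_le_sum_mul_sum_of_sq_eq_mul (W ×ˢ W)
    (r := fun p => icA G p.1 p.2 * ((f p.1 - f p.2) * (g p.1 - g p.2)))
    (f := fun p => icA G p.1 p.2 * ((f p.1 - f p.2) * (f p.1 - f p.2)))
    (g := fun p => icA G p.1 p.2 * ((g p.1 - g p.2) * (g p.1 - g p.2)))
    (fun p _ => mul_nonneg (icA_nonneg G _ _) (mul_self_nonneg _))
    (fun p _ => mul_nonneg (icA_nonneg G _ _) (mul_self_nonneg _))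
    (fun p _ => by ring)
  nlinarith

lemma icE_nonneg (G : SimpleGraph V) (W : Finset V) (f : V → ℝ) : 0 ≤ icE G W f f := by
  unfold icE
  have : 0 ≤ ∑ p ∈ W ×ˢ W, icA G p.1 p.2 * ((f p.1 - f p.2) * (f p.1 - f p.2)) :=
    Finset.sum_nonneg (fun p _ => mul_nonneg (icA_nonneg G _ _) (mul_self_nonneg _))
  linarith

lemma icE_le_energy (G : SimpleGraph V) (W : Finset V) (f : V → ℝ) :
    ENNReal.ofReal (icE G W f f) ≤ energy G f := by
  unfold icE energy
  rw [ENNReal.ofReal_mul (by norm_num)]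
  have : ENNReal.ofReal (1 / 2) = 1 / 2 := by
    rw [ENNReal.ofReal_div_of_pos (by norm_num)]; simp
  rw [this]
  gcongr
  rw [ENNReal.ofReal_sum_of_nonneg
    (fun p _ => mul_nonneg (icA_nonneg G _ _) (mul_self_nonneg _))]
  refine le_trans (le_of_eq ?_) (ENNReal.sum_le_tsum (W ×ˢ W))
  refine Finset.sum_congr rfl fun p _ => ?_
  unfold icA
  split_ifs <;> simp [sq]

/-- Telescoping along a walk. -/
lemma ic_walk_tele (G : SimpleGraph V) (u : V → ℝ) {x y : V} (p : G.Walk x y) :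
    u x - u y = (p.darts.map fun d => u d.fst - u d.snd).sum := by
  induction p with
  | nil => simp
  | cons h p ih => simp [← ih]

lemma ic_path_bound (G : SimpleGraph V) (B W : Finset V) (hBW : B ⊆ W)
    (hW : ∀ a ∈ B, ∀ b, G.Adj a b → b ∈ W) (u : V → ℝ) (hu : ∀ a ∉ B, u a = 0)
    {x y : V} (hy : y ∉ B) (p : G.Walk x y) (hp : p.IsPath) :
    (u x) ^ 2 ≤ p.length * (2 * icE G W u u) := by
  have hnd : p.darts.Nodup := SimpleGraph.Walk.darts_nodup_of_support_nodup hp.support_nodup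
  have h1 := ic_walk_tele G u p
  rw [hu y hy, sub_zero, ← List.sum_toFinset _ hnd] at h1
  have h2 := sq_sum_le_card_mul_sum_sq (s := p.darts.toFinset) (f := fun d => u d.fst - u d.snd)
  rw [← h1, List.toFinset_card_of_nodup hnd, SimpleGraph.Walk.length_darts] at h2
  refine h2.trans ?_
  gcongr
  unfold icE
  have h3 : ∑ d ∈ p.darts.toFinset, (u d.fst - u d.snd) ^ 2 =
      ∑ q ∈ p.darts.toFinset.image SimpleGraph.Dart.toProd,
        icA G q.1 q.2 * ((u q.1 - u q.2) * (u q.1 - u q.2)) := by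
    rw [Finset.sum_image (fun a _ b _ h => SimpleGraph.Dart.toProd_injective h)]
    refine Finset.sum_congr rfl fun d _ => ?_
    simp [icA, d.adj, sq]
  rw [h3, ← mul_assoc]
  norm_num
  rw [← Finset.sum_filter_add_sum_filter_not _ (fun q => q ∈ W ×ˢ W)]
  have h4 : ∑ q ∈ (p.darts.toFinset.image SimpleGraph.Dart.toProd).filter (fun q => ¬ q ∈ W ×ˢ W),
        icA G q.1 q.2 * ((u q.1 - u q.2) * (u q.1 - u q.2)) = 0 := by
    refine Finset.sum_eq_zero fun q hq => ?_
    simp only [Finset.mem_filter, Finset.mem_product, not_and_or] at hq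
    by_cases ha : G.Adj q.1 q.2
    · have n1 : q.1 ∉ B := fun h => hq.2.elim (fun h' => h' (hBW h)) (fun h' => h' (hW _ h _ ha))
      have n2 : q.2 ∉ B := fun h => hq.2.elim (fun h' => h' (hW _ h _ ha.symm)) (fun h' => h' (hBW h))
      rw [hu _ n1, hu _ n2]; ring
    · simp [icA, ha]
  rw [h4, add_zero]
  refine Finset.sum_le_sum_of_subset_of_nonneg ?_
    (fun p _ _ => mul_nonneg (icA_nonneg G _ _) (mul_self_nonneg _))
  intro q hq
  exact (Finset.mem_filter.1 hq).2

/-! ### Balls and resistance bounds -/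

lemma ic_ball_finite (G : SimpleGraph V) [G.LocallyFinite] (hconn : G.Connected) (o : V) (r : ℕ) :
    {x : V | G.dist o x ≤ r}.Finite := by
  induction r with
  | zero =>
    refine (Set.finite_singleton o).subset fun x hx => ?_
    have : G.dist o x = 0 := by simpa using hx
    exact ((hconn.dist_eq_zero_iff).1 this).symm
  | succ r ih =>
    have hfin : (⋃ x ∈ {x : V | G.dist o x ≤ r}, G.neighborSet x).Finite :=
      ih.biUnion fun x _ => Set.toFinite _
    refine (ih.union hfin).subset fun x hx => ?_
    obtain ⟨p, hp⟩ := hconn.exists_walk_length_eq_dist x o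
    cases p with
    | nil => left; simp
    | cons h p =>
      rename_i v
      right
      simp only [Set.mem_iUnion]
      refine ⟨v, ?_, h.symm⟩
      have h1 := SimpleGraph.dist_le p.reverse
      simp only [SimpleGraph.Walk.length_reverse, SimpleGraph.Walk.length_cons] at h1 hp
      have hx' : G.dist o x ≤ r + 1 := hx
      rw [SimpleGraph.dist_comm] at hx'
      show G.dist o v ≤ r
      omega

/-- The ball as a finset. -/
def icB (G : SimpleGraph V) [G.LocallyFinite] (hconn : G.Connected) (o : V) (r : ℕ) : Finset V :=
  (ic_ball_finite G hconn o r).toFinset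

lemma ic_mem_B (G : SimpleGraph V) [G.LocallyFinite] (hconn : G.Connected) (o : V) (r : ℕ) (x : V) :
    x ∈ icB G hconn o r ↔ G.dist o x ≤ r := by
  simp [icB]

lemma ic_B_sub (G : SimpleGraph V) [G.LocallyFinite] (hconn : G.Connected) (o : V) (r : ℕ) :
    icB G hconn o r ⊆ icB G hconn o (r + 1) := by
  intro x hx
  rw [ic_mem_B] at *
  omega

lemma ic_B_adj (G : SimpleGraph V) [G.LocallyFinite] (hconn : G.Connected) (o : V) (r : ℕ) :
    ∀ a ∈ icB G hconn o r, ∀ b, G.Adj a b → b ∈ icB G hconn o (r + 1) := by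
  intro a ha b hab
  rw [ic_mem_B] at *
  have h1 := hconn.dist_triangle (u := o) (v := a) (w := b)
  have h2 : G.dist a b = 1 := SimpleGraph.dist_eq_one_iff_adj.2 hab
  omega

lemma ic_exit (G : SimpleGraph V) [G.LocallyFinite] (hconn : G.Connected) (hinf : Infinite V)
    (o : V) (r : ℕ) (x : V) (hx : x ∈ icB G hconn o r) :
    ∃ y, y ∉ icB G hconn o r ∧ ∃ p : G.Walk x y, p.IsPath ∧ p.length ≤ 2 * r + 1 := by
  obtain ⟨z, hz⟩ := Infinite.exists_notMem_finset (icB G hconn o r)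
  have ho : o ∈ icB G hconn o r := by rw [ic_mem_B]; simp
  obtain ⟨w⟩ := hconn.preconnected o z
  obtain ⟨d, -, h1, h2⟩ := w.exists_boundary_dart (icB G hconn o r : Set V) ho hz
  refine ⟨d.snd, h2, ?_⟩
  obtain ⟨p, hp⟩ := hconn.exists_walk_length_eq_dist x d.snd
  refine ⟨p, p.isPath_of_length_eq_dist hp, ?_⟩
  have h3 := ic_B_adj G hconn o r _ h1 _ d.adj
  rw [ic_mem_B] at h3 hx
  have h4 := hconn.dist_triangle (u := x) (v := o) (w := d.snd)
  rw [SimpleGraph.dist_comm (u := x) (v := o)] at h4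
  omega

lemma ic_deg_pos (G : SimpleGraph V) [G.LocallyFinite] (hconn : G.Connected) (hinf : Infinite V) :
    ∀ x, 0 < G.degree x := fun x => by
  exact hconn.preconnected.degree_pos_of_nontrivial x

lemma icU_bound (G : SimpleGraph V) [G.LocallyFinite] (hconn : G.Connected) (hinf : Infinite V)
    (o : V) (r : ℕ) (x : V) (hx : x ∈ icB G hconn o r) (y : V) (hy : y ∈ icB G hconn o r) (N : ℕ) :
    icU G (icB G hconn o r) N x y ≤ 2 * (2 * r + 1) := by
  set B := icB G hconn o r with hB
  set K : ℝ := 2 * (2 * r + 1) with hK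
  have hKpos : 0 < K := by positivity
  have hE := icE_UU G (ic_deg_pos G hconn hinf) B _ (ic_B_sub G hconn o r) (ic_B_adj G hconn o r) N x hx
  have hE0 := icE_nonneg G (icB G hconn o (r + 1)) (icU G B N x)
  have key : ∀ z ∈ B, (icU G B N x z) ^ 2 ≤ K * icU G B N x x := by
    intro z hz
    obtain ⟨y, hy, p, hp, hl⟩ := ic_exit G hconn hinf o r z hz
    have h := ic_path_bound G B _ (ic_B_sub G hconn o r) (ic_B_adj G hconn o r) (icU G B N x)
      (fun a ha => icU_off G B N x hx a ha) hy p hp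
    have hl' : (p.length : ℝ) ≤ 2 * r + 1 := by exact_mod_cast hl
    refine h.trans ?_
    calc (p.length : ℝ) * (2 * icE G (icB G hconn o (r + 1)) (icU G B N x) (icU G B N x))
        ≤ (2 * r + 1) * (2 * icU G B N x x) := by gcongr
      _ = _ := by rw [hK]; ring
  have h0 := icU_nonneg G B N x x
  have hxx : icU G B N x x ≤ K := by
    have := key x hx
    by_contra hcon
    push Not at hcon
    nlinarith
  have := key y hy
  have h1 := icU_nonneg G B N x y
  by_contra hcon
  push Not at hcon
  nlinarith

lemma icQ_tendsto (G : SimpleGraph V) [G.LocallyFinite] (hconn : G.Connected) (hinf : Infinite V)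
    (o : V) (r : ℕ) (x : V) (hx : x ∈ icB G hconn o r) (y : V) (hy : y ∈ icB G hconn o r) :
    Filter.Tendsto (fun n => icQ G (icB G hconn o r) n x y) Filter.atTop (nhds 0) := by
  have hd : (G.degree y : ℝ) ≠ 0 := by exact_mod_cast (ic_deg_pos G hconn hinf y).ne'
  have hs : Summable fun n => icQ G (icB G hconn o r) n x y / G.degree y := by
    refine summable_of_sum_range_le (c := 2 * (2 * r + 1))
      (fun n => div_nonneg (icQ_nonneg G _ n x y) (by positivity)) fun N => ?_
    exact icU_bound G hconn hinf o r x hx y hy N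
  have := (hs.tendsto_atTop_zero).mul_const (G.degree y : ℝ)
  simpa [div_mul_cancel₀ _ hd] using this

lemma ic_effRes_le (G : SimpleGraph V) [G.LocallyFinite] (hconn : G.Connected) (hinf : Infinite V)
    (o : V) (r : ℕ) (U : ℝ) (hU0 : 0 ≤ U)
    (hU : ∀ N, icU G (icB G hconn o r) N o o ≤ U) :
    effRes G {o} {x : V | G.dist o x ≤ r}ᶜ ≤ ENNReal.ofReal U := by
  unfold effRes
  rw [ENNReal.inv_le_iff_inv_le]
  refine le_iInf₂ fun f hf => ?_
  obtain ⟨hfin, hf1, hf0⟩ := hf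
  have ho : o ∈ icB G hconn o r := by rw [ic_mem_B]; simp
  have hfo : f o = 1 := hf1 o rfl
  have hfB : ∀ a ∉ icB G hconn o r, f a = 0 := fun a ha => hf0 a (by
    rw [ic_mem_B] at ha; exact ha)
  set B := icB G hconn o r with hB
  set W := icB G hconn o (r + 1) with hW
  have hlim : Filter.Tendsto (fun N => (f o - ∑ a ∈ B, f a * icQ G B N o a) ^ 2)
      Filter.atTop (nhds ((f o - ∑ a ∈ B, f a * 0) ^ 2)) := by
    refine Filter.Tendsto.pow (tendsto_const_nhds.sub ?_) 2
    exact tendsto_finsetSum _ fun a ha =>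
      (icQ_tendsto G hconn hinf o r o ho a ha).const_mul (f a)
  have hle : ∀ N, (f o - ∑ a ∈ B, f a * icQ G B N o a) ^ 2 ≤ icE G W f f * U := by
    intro N
    have hpos := ic_deg_pos G hconn hinf
    rw [← icE_U G hpos B W (ic_B_sub G hconn o r) (ic_B_adj G hconn o r) N o ho f hfB]
    refine (icE_cs G W _ _).trans ?_
    refine mul_le_mul_of_nonneg_left ?_ (icE_nonneg G W f)
    exact (icE_UU G hpos B W (ic_B_sub G hconn o r) (ic_B_adj G hconn o r) N o ho).trans (hU N)
  have h1 : 1 ≤ icE G W f f * U := by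
    have := le_of_tendsto' hlim hle
    simpa [hfo] using this
  refine le_trans ?_ (icE_le_energy G W f)
  have hUpos : 0 < U := by
    rcases hU0.eq_or_lt with h | h
    · rw [← h] at h1; norm_num at h1
    · exact h
  rw [← ENNReal.ofReal_inv_of_pos hUpos]
  refine ENNReal.ofReal_le_ofReal ?_
  rw [inv_le_iff_one_le_mul₀ hUpos]
  exact h1

/-- Expected number of collisions at time `n` before leaving `B`, from `(x,x)`. -/
def icC (G : SimpleGraph V) [G.LocallyFinite] (B : Finset V) (n : ℕ) (x : V) : ℝ :=
  ∑ y ∈ B, icQ G B n x y * icQ G B n x y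

lemma icC_nonneg (G : SimpleGraph V) [G.LocallyFinite] (B : Finset V) (n : ℕ) (x : V) :
    0 ≤ icC G B n x := Finset.sum_nonneg fun y _ => mul_self_nonneg _

lemma ic_even_le (G : SimpleGraph V) [G.LocallyFinite] (B : Finset V) (N : ℕ) (x : V) :
    ∑ n ∈ Finset.range N, icQ G B (n + n) x x / G.degree x ≤ icU G B (2 * N) x x := by
  induction N with
  | zero => simp [icU]
  | succ N ih =>
    rw [Finset.sum_range_succ]
    have : icU G B (2 * (N + 1)) x x = icU G B (2 * N) x x +
        icQ G B (2 * N) x x / G.degree x + icQ G B (2 * N + 1) x x / G.degree x := by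
      unfold icU
      rw [show 2 * (N + 1) = 2 * N + 1 + 1 by ring, Finset.sum_range_succ, Finset.sum_range_succ]
    rw [this, ← two_mul]
    have h : 0 ≤ icQ G B (2 * N + 1) x x / G.degree x :=
      div_nonneg (icQ_nonneg G B _ x x) (by positivity)
    linarith

lemma icC_upper (G : SimpleGraph V) [G.LocallyFinite] (hconn : G.Connected) (hinf : Infinite V)
    (hdeg : ∀ x : V, G.degree x ≤ 6)
    (o : V) (r : ℕ) (x : V) (hx : x ∈ icB G hconn o r) (N : ℕ) :
    ∑ n ∈ Finset.range N, icC G (icB G hconn o r) n x ≤ 12 * (2 * r + 1) := by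
  set B := icB G hconn o r with hB
  have hpos := ic_deg_pos G hconn hinf
  have h1 : ∀ n, icC G B n x ≤ 6 * (icQ G B (n + n) x x / G.degree x) := by
    intro n
    rw [icQ_diag G hpos B n n x hx, Finset.mul_sum]
    refine Finset.sum_le_sum fun y _ => ?_
    have hy : (0 : ℝ) < G.degree y := by exact_mod_cast hpos y
    have hy6 : (G.degree y : ℝ) ≤ 6 := by exact_mod_cast hdeg y
    rw [← mul_div_assoc, le_div_iff₀ hy, mul_comm]
    exact mul_le_mul_of_nonneg_right hy6 (mul_self_nonneg _)
  calc _ ≤ ∑ n ∈ Finset.range N, 6 * (icQ G B (n + n) x x / G.degree x) :=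
        Finset.sum_le_sum fun n _ => h1 n
    _ = 6 * ∑ n ∈ Finset.range N, icQ G B (n + n) x x / G.degree x := by rw [Finset.mul_sum]
    _ ≤ 6 * (2 * (2 * r + 1)) := by
        have := (ic_even_le G B N x).trans (icU_bound G hconn hinf o r x hx x hx (2 * N))
        linarith
    _ = _ := by ring

lemma icC_lower (G : SimpleGraph V) [G.LocallyFinite] (hpos : ∀ x, 0 < G.degree x)
    (B : Finset V) (x : V) (hx : x ∈ B) (N : ℕ) :
    icU G B N x x ≤ 2 * ∑ n ∈ Finset.range (N + 1), icC G B n x := by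
  have he : ∀ n, icQ G B (n + n) x x / G.degree x ≤ icC G B n x := by
    intro n
    rw [icQ_diag G hpos B n n x hx]
    refine Finset.sum_le_sum fun y _ => ?_
    have hy : (1 : ℝ) ≤ G.degree y := by exact_mod_cast hpos y
    exact div_le_self (mul_self_nonneg _) hy
  have ho : ∀ n, icQ G B (n + (n + 1)) x x / G.degree x ≤ (icC G B n x + icC G B (n + 1) x) / 2 := by
    intro n
    rw [icQ_diag G hpos B n (n + 1) x hx]
    unfold icC
    rw [← Finset.sum_add_distrib, Finset.sum_div]
    refine Finset.sum_le_sum fun y _ => ?_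
    have hy : (1 : ℝ) ≤ G.degree y := by exact_mod_cast hpos y
    refine (div_le_self (mul_nonneg (icQ_nonneg G B _ x y) (icQ_nonneg G B _ x y)) hy).trans ?_
    nlinarith [sq_nonneg (icQ G B n x y - icQ G B (n + 1) x y)]
  have h2 : ∀ M, icU G B (2 * M) x x + icC G B M x / 2 ≤
      2 * ∑ n ∈ Finset.range (M + 1), icC G B n x - icC G B M x := by
    intro M
    induction M with
    | zero =>
      have := icC_nonneg G B 0 x
      simp [icU]; linarith
    | succ M ih =>
      have e : icU G B (2 * (M + 1)) x x = icU G B (2 * M) x x +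
          icQ G B (M + M) x x / G.degree x + icQ G B (M + (M + 1)) x x / G.degree x := by
        unfold icU
        rw [show 2 * (M + 1) = 2 * M + 1 + 1 by ring, Finset.sum_range_succ, Finset.sum_range_succ,
          show M + M = 2 * M by ring, show M + (M + 1) = 2 * M + 1 by ring]
      rw [e, Finset.sum_range_succ]
      have := he M
      have := ho M
      have := icC_nonneg G B M x
      have := icC_nonneg G B (M + 1) x
      linarith
  have h3 : icU G B N x x ≤ icU G B (2 * N) x x := by
    unfold icU
    refine Finset.sum_le_sum_of_subset_of_nonneg (Finset.range_mono (by omega)) ?_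
    intro n _ _
    exact div_nonneg (icQ_nonneg G B _ x x) (by positivity)
  have := h2 N
  have := icC_nonneg G B N x
  linarith

/-! ### A second moment bound -/

lemma ic_tsum_shift (g : ℕ → ℝ≥0∞) (m : ℕ) :
    ∑' n, (if m ≤ n then g n else 0) = ∑' k, g (m + k) := by
  have hinj : Function.Injective (fun k : ℕ => m + k) := fun a b h => by simpa using h
  rw [← hinj.tsum_eq (f := fun n => if m ≤ n then g n else 0)]
  · simp
  · intro n hn
    have : m ≤ n := by
      by_contra h
      simp [h] at hn
    exact ⟨n - m, by simp; omega⟩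

lemma ic_sq_tsum (a : ℕ → ℝ≥0∞) :
    (∑' n, a n) * (∑' n, a n) ≤ 2 * ∑' m, ∑' k, a m * a (m + k) := by
  have h1 : (∑' n, a n) * (∑' n, a n) = ∑' m, ∑' n, a m * a n := by
    rw [← ENNReal.tsum_mul_right]
    refine tsum_congr fun m => ?_
    rw [ENNReal.tsum_mul_left]
  have h2 : ∑' m, ∑' n, a m * a n ≤ (∑' m, ∑' n, if m ≤ n then a m * a n else 0) +
      ∑' m, ∑' n, if n ≤ m then a m * a n else 0 := by
    rw [← ENNReal.tsum_add]
    refine ENNReal.tsum_le_tsum fun m => ?_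
    rw [← ENNReal.tsum_add]
    refine ENNReal.tsum_le_tsum fun n => ?_
    rcases le_total m n with h | h <;> simp [h]
  have h3 : (∑' m, ∑' n, if n ≤ m then a m * a n else 0) =
      ∑' m, ∑' n, if m ≤ n then a m * a n else 0 := by
    rw [ENNReal.tsum_comm]
    refine tsum_congr fun m => tsum_congr fun n => ?_
    rw [mul_comm]
  rw [h1]
  refine h2.trans (le_of_eq ?_)
  rw [h3, two_mul]
  simp_rw [ic_tsum_shift]

lemma ic_pointwise (c H : ℝ≥0∞) (hc : c ≠ ⊤) : 4 * c * H ≤ H * H + 4 * c * c := by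
  by_cases hH : H = ⊤
  · subst hH; simp
  · lift c to NNReal using hc
    lift H to NNReal using hH
    norm_cast
    rw [← NNReal.coe_le_coe]
    push_cast
    nlinarith [sq_nonneg ((H : ℝ) - 2 * c)]

lemma ic_second_moment {Ω : Type*} [MeasurableSpace Ω] (ν : Measure Ω) [IsProbabilityMeasure ν]
    (C : ℕ → Set Ω) (hC : ∀ n, MeasurableSet (C n)) (M c : ℝ≥0∞) (hM : M = ∑' n, ν (C n))
    (hMtop : M ≠ ⊤) (hc0 : c ≠ 0) (hc : c ≠ ⊤)
    (h2 : 2 * ∑' m, ∑' k, ν (C m ∩ C (m + k)) ≤ c * M) :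
    M ≤ 4 * c * ν {ω | M / 2 < ∑' n, (C n).indicator 1 ω} := by
  set H : Ω → ℝ≥0∞ := fun ω => ∑' n, (C n).indicator 1 ω with hH
  have hmeas : ∀ n, Measurable ((C n).indicator (1 : Ω → ℝ≥0∞)) :=
    fun n => measurable_one.indicator (hC n)
  have hHm : Measurable H := by
    show Measurable fun ω => ∑' n, (C n).indicator (1 : Ω → ℝ≥0∞) ω
    exact Measurable.ennreal_tsum hmeas
  have hA : MeasurableSet {ω | M / 2 < H ω} := measurableSet_lt measurable_const hHm
  have i1 : ∫⁻ ω, H ω ∂ν = M := by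
    rw [hH, lintegral_tsum fun n => (hmeas n).aemeasurable, hM]
    exact tsum_congr fun n => lintegral_indicator_one (hC n)
  have i2 : ∫⁻ ω, H ω * H ω ∂ν ≤ c * M := by
    refine le_trans ?_ h2
    calc ∫⁻ ω, H ω * H ω ∂ν ≤ ∫⁻ ω, 2 * ∑' m, ∑' k, (C m ∩ C (m + k)).indicator 1 ω ∂ν := by
          refine lintegral_mono fun ω => ?_
          refine (ic_sq_tsum _).trans (le_of_eq ?_)
          congr 1
          refine tsum_congr fun m => tsum_congr fun k => ?_
          rw [Set.inter_indicator_one]; rfl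
      _ = _ := by
          have hm2 : ∀ m k, Measurable ((C m ∩ C (m + k)).indicator (1 : Ω → ℝ≥0∞)) :=
            fun m k => measurable_one.indicator ((hC m).inter (hC _))
          rw [lintegral_const_mul _
            (Measurable.ennreal_tsum fun m => Measurable.ennreal_tsum fun k => hm2 m k)]
          rw [lintegral_tsum fun m => (Measurable.ennreal_tsum fun k => hm2 m k).aemeasurable]
          congr 1
          refine tsum_congr fun m => ?_
          rw [lintegral_tsum fun k => (hm2 m k).aemeasurable]
          exact tsum_congr fun k => lintegral_indicator_one ((hC m).inter (hC _))
  have i3 : ∫⁻ ω, 4 * c * H ω ∂ν ≤ ∫⁻ ω, (2 * c * M + (H ω * H ω +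
      4 * c * c * {ω | M / 2 < H ω}.indicator 1 ω)) ∂ν := by
    refine lintegral_mono fun ω => ?_
    by_cases h : M / 2 < H ω
    · have : {ω | M / 2 < H ω}.indicator (1 : Ω → ℝ≥0∞) ω = 1 := by
        simp [Set.indicator, h]
      simp only [this, mul_one]
      exact (ic_pointwise c (H ω) hc).trans le_add_self
    · push Not at h
      calc 4 * c * H ω ≤ 4 * c * (M / 2) := by gcongr
        _ = 2 * c * M := by
          rw [show (4 : ℝ≥0∞) = 2 * 2 by norm_num, show 2 * 2 * c * (M / 2) = 2 * c * (2 * (M / 2)) by ring,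
            ENNReal.mul_div_cancel (by norm_num) (by norm_num)]
        _ ≤ _ := le_self_add
  rw [lintegral_const_mul _ hHm, i1, lintegral_add_left measurable_const,
    lintegral_add_left (show Measurable fun ω => H ω * H ω from hHm.mul hHm), lintegral_const_mul _ (measurable_one.indicator hA),
    lintegral_indicator_one hA, lintegral_const, measure_univ, mul_one] at i3
  have i4 : 4 * c * M ≤ 2 * c * M + (c * M + 4 * c * c * ν {ω | M / 2 < H ω}) :=
    i3.trans (by gcongr)
  have hcM : c * M ≠ ⊤ := ENNReal.mul_ne_top hc hMtop
  have i5 : 3 * (c * M) + c * M ≤ 3 * (c * M) + c * (4 * c * ν {ω | M / 2 < H ω}) := by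
    calc 3 * (c * M) + c * M = 4 * c * M := by ring
      _ ≤ _ := i4
      _ = _ := by ring
  have i6 := (ENNReal.add_le_add_iff_left (ENNReal.mul_ne_top (by norm_num) hcM)).1 i5
  exact (ENNReal.mul_le_mul_iff_right hc0 hc).1 i6

/-! ### The law of the pair of walks -/

/-- Trajectories with the prescribed beginning. -/
def icPre (n : ℕ) (w : ℕ → V × V) : Set (ℕ → V × V) := {ω | ∀ i ≤ n, ω i = w i}

/-- Trajectories staying in `B × B` during times `n+1, …, n+k`. -/
def icStay (B : Finset V) (n k : ℕ) : Set (ℕ → V × V) :=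
  {ω | ∀ i, n < i → i ≤ n + k → ω i ∈ B ×ˢ B}

lemma icStay_succ (B : Finset V) (n k : ℕ) :
    icStay B n (k + 1) = {ω | ω (n + 1) ∈ B ×ˢ B} ∩ icStay B (n + 1) k := by
  ext ω
  simp only [icStay, Set.mem_inter_iff, Set.mem_setOf_eq]
  constructor
  · intro h
    exact ⟨h _ (by omega) (by omega), fun i h1 h2 => h i (by omega) (by omega)⟩
  · rintro ⟨h0, h⟩ i h1 h2
    rcases Nat.lt_or_ge (n + 1) i with h3 | h3
    · exact h i h3 (by omega)
    · have : i = n + 1 := by omega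
      subst this; exact h0

section law
variable [MeasurableSpace V] [MeasurableSingletonClass V]

lemma ic_meas_at (n : ℕ) (z : V × V) : MeasurableSet {ω : ℕ → V × V | ω n = z} :=
  measurableSet_preimage (measurable_pi_apply (X := fun _ : ℕ => V × V) n) (measurableSet_singleton z)

lemma ic_meas_mem (n : ℕ) (C : Finset (V × V)) : MeasurableSet {ω : ℕ → V × V | ω n ∈ C} :=
  measurableSet_preimage (measurable_pi_apply (X := fun _ : ℕ => V × V) n) C.measurableSet

lemma icPre_meas (n : ℕ) (w : ℕ → V × V) : MeasurableSet (icPre n w) := by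
  have : icPre n w = ⋂ i, ⋂ (_ : i ≤ n), {ω : ℕ → V × V | ω i = w i} := by
    ext ω; simp [icPre]
  rw [this]
  exact MeasurableSet.iInter fun i => MeasurableSet.iInter fun _ => ic_meas_at i _

lemma icStay_meas (B : Finset V) (n k : ℕ) : MeasurableSet (icStay B n k) := by
  have : icStay B n k = ⋂ i, ⋂ (_ : n < i), ⋂ (_ : i ≤ n + k), {ω : ℕ → V × V | ω i ∈ B ×ˢ B} := by
    ext ω; simp [icStay]
  rw [this]
  exact MeasurableSet.iInter fun i => MeasurableSet.iInter fun _ => MeasurableSet.iInter fun _ =>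
    ic_meas_mem i _

lemma ic_step_eq (G : SimpleGraph V) [G.LocallyFinite] (hpos : ∀ x, 0 < G.degree x) (x y : V) :
    srwStep G x y = ENNReal.ofReal (icP G x y) := by
  unfold srwStep icP
  split_ifs
  · rw [ENNReal.ofReal_inv_of_pos (by exact_mod_cast hpos x)]; simp
  · simp

lemma icPre_zero (G : SimpleGraph V) [G.LocallyFinite] (o : V) (ν : Measure (ℕ → V × V))
    (hν : IsSRWPairLaw G o o ν) : ν (icPre 0 (fun _ => (o, o))) = 1 := by
  have h := hν.2 0 (fun _ => (o, o))
  have e : icPre 0 (fun _ => (o, o)) = {ω : ℕ → V × V | ∀ i : Fin (0 + 1), ω i = (o, o)} := by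
    ext ω
    simp [icPre]
  rw [e, h]
  simp [srwCylProb]

lemma icPre_succ (G : SimpleGraph V) [G.LocallyFinite] (hpos : ∀ x, 0 < G.degree x)
    (o : V) (ν : Measure (ℕ → V × V))
    (hν : IsSRWPairLaw G o o ν) (n : ℕ) (w : ℕ → V × V) :
    ν (icPre (n + 1) w) = ν (icPre n w) *
      ENNReal.ofReal (icP G (w n).1 (w (n + 1)).1 * icP G (w n).2 (w (n + 1)).2) := by
  have e : ∀ m, icPre m w = {ω : ℕ → V × V | ∀ i : Fin (m + 1), ω i = w i} := by
    intro m
    ext ω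
    simp only [icPre, Set.mem_setOf_eq]
    exact ⟨fun h i => h i (by omega), fun h i hi => h ⟨i, by omega⟩⟩
  rw [e, e, hν.2 (n + 1) (fun i => w i), hν.2 n (fun i => w i)]
  rw [ENNReal.ofReal_mul (icP_nonneg G _ _), ← ic_step_eq G hpos, ← ic_step_eq G hpos]
  unfold srwCylProb
  rw [Fin.prod_univ_castSucc, Fin.prod_univ_castSucc (n := n)
    (f := fun i : Fin (n + 1) => srwStep G (w (i.castSucc : ℕ)).2 (w (i.succ : ℕ)).2)]
  simp only [Fin.val_castSucc, Fin.val_succ, Fin.val_last, Fin.val_zero]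
  have comm6 : ∀ a b c d e f : ℝ≥0∞,
      a * (b * c) * (d * (e * f)) = a * b * (d * e) * (c * f) := by
    intros; ring
  exact comm6 _ _ _ _ _ _

lemma ic_split (B : Finset V) (ν : Measure (ℕ → V × V)) (n : ℕ) (w : ℕ → V × V)
    (R : Set (ℕ → V × V)) (hR : MeasurableSet R) :
    ν (icPre n w ∩ ({ω | ω (n + 1) ∈ B ×ˢ B} ∩ R)) =
      ∑ z ∈ B ×ˢ B, ν (icPre (n + 1) (Function.update w (n + 1) z) ∩ R) := by
  have e : icPre n w ∩ ({ω | ω (n + 1) ∈ B ×ˢ B} ∩ R) =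
      ⋃ z ∈ B ×ˢ B, (icPre (n + 1) (Function.update w (n + 1) z) ∩ R) := by
    ext ω
    simp only [Set.mem_inter_iff, Set.mem_iUnion, Set.mem_setOf_eq, icPre]
    constructor
    · rintro ⟨h1, h2, h3⟩
      refine ⟨ω (n + 1), h2, fun i hi => ?_, h3⟩
      by_cases hi' : i = n + 1
      · subst hi'; simp
      · rw [Function.update_of_ne hi']; exact h1 i (by omega)
    · rintro ⟨z, hz, h1, h3⟩
      refine ⟨fun i hi => ?_, ?_, h3⟩
      · have := h1 i (by omega)
        rwa [Function.update_of_ne (by omega)] at this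
      · have := h1 (n + 1) le_rfl
        rw [Function.update_self] at this
        rw [this]; exact hz
  rw [e, measure_biUnion_finset]
  · intro z _ z' _ hzz
    refine Set.disjoint_left.2 fun ω h1 h2 => hzz ?_
    have a := h1.1 (n + 1) le_rfl
    have b := h2.1 (n + 1) le_rfl
    rw [Function.update_self] at a b
    rw [← a, b]
  · exact fun z _ => (icPre_meas _ _).inter hR

lemma ic_sum_step (G : SimpleGraph V) [G.LocallyFinite] (hpos : ∀ x, 0 < G.degree x)
    (B : Finset V) (o : V) (ν : Measure (ℕ → V × V)) (hν : IsSRWPairLaw G o o ν)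
    (k : ℕ) (z : V × V) (n : ℕ) (w : ℕ → V × V) :
    ∑ z' ∈ B ×ˢ B, ν (icPre (n + 1) (Function.update w (n + 1) z')) *
        ENNReal.ofReal (icQ G B k z'.1 z.1 * icQ G B k z'.2 z.2) =
      ν (icPre n w) *
        ENNReal.ofReal (icQ G B (k + 1) (w n).1 z.1 * icQ G B (k + 1) (w n).2 z.2) := by
  have hpre : ∀ z', icPre n (Function.update w (n + 1) z') = icPre n w := by
    intro z'
    ext ω
    simp only [icPre, Set.mem_setOf_eq]
    refine forall₂_congr fun i hi => ?_
    rw [Function.update_of_ne (by omega)]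
  simp only [icQ]
  rw [Finset.sum_mul_sum, ← Finset.sum_product', ENNReal.ofReal_sum_of_nonneg, Finset.mul_sum]
  · refine Finset.sum_congr rfl fun z' _ => ?_
    rw [icPre_succ G hpos o ν hν, hpre, Function.update_self, Function.update_of_ne (by omega),
      mul_assoc, ← ENNReal.ofReal_mul (mul_nonneg (icP_nonneg G _ _) (icP_nonneg G _ _))]
    congr 2
    ring
  · intro p _
    exact mul_nonneg (mul_nonneg (icP_nonneg G _ _) (icQ_nonneg G B k _ _))
      (mul_nonneg (icP_nonneg G _ _) (icQ_nonneg G B k _ _))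

lemma ic_law1 (G : SimpleGraph V) [G.LocallyFinite] (hpos : ∀ x, 0 < G.degree x)
    (B : Finset V) (o : V) (ν : Measure (ℕ → V × V)) (hν : IsSRWPairLaw G o o ν)
    (k : ℕ) (z : V × V) : ∀ (n : ℕ) (w : ℕ → V × V),
    ν (icPre n w ∩ (icStay B n k ∩ {ω | ω (n + k) = z})) =
      ν (icPre n w) * ENNReal.ofReal (icQ G B k (w n).1 z.1 * icQ G B k (w n).2 z.2) := by
  induction k with
  | zero =>
    intro n w
    by_cases h : w n = z
    · have : icPre n w ∩ (icStay B n 0 ∩ {ω | ω (n + 0) = z}) = icPre n w := by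
        refine Set.inter_eq_left.2 fun ω hω => ⟨fun i h1 h2 => by omega, ?_⟩
        rw [Set.mem_setOf_eq, ← h]; exact hω n le_rfl
      rw [this, ← h]
      simp [icQ]
    · have : icPre n w ∩ (icStay B n 0 ∩ {ω | ω (n + 0) = z}) = ∅ := by
        refine Set.eq_empty_iff_forall_notMem.2 fun ω hω => h ?_
        rw [← hω.1 n le_rfl]; exact hω.2.2
      rw [this, measure_empty]
      have h0 : icQ G B 0 (w n).1 z.1 * icQ G B 0 (w n).2 z.2 = 0 := by
        simp only [icQ]
        by_cases h1 : (w n).1 = z.1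
        · have h2 : (w n).2 ≠ z.2 := fun h2 => h (Prod.ext h1 h2)
          simp [h2]
        · simp [h1]
      rw [h0]; simp
  | succ k ih =>
    intro n w
    rw [icStay_succ, Set.inter_assoc, ic_split B ν n w _
      ((icStay_meas B _ _).inter (ic_meas_at _ _)), ← ic_sum_step G hpos B o ν hν]
    refine Finset.sum_congr rfl fun z' _ => ?_
    have := ih (n + 1) (Function.update w (n + 1) z')
    rw [Function.update_self] at this
    rw [← this, show n + (k + 1) = n + 1 + k by ring]

lemma ic_law2 (G : SimpleGraph V) [G.LocallyFinite] (hpos : ∀ x, 0 < G.degree x)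
    (B : Finset V) (o : V) (ν : Measure (ℕ → V × V)) (hν : IsSRWPairLaw G o o ν)
    (j k : ℕ) (x z : V × V) : ∀ (n : ℕ) (w : ℕ → V × V),
    ν (icPre n w ∩ (icStay B n (j + k) ∩ ({ω | ω (n + j) = x} ∩ {ω | ω (n + j + k) = z}))) =
      ν (icPre n w) * ENNReal.ofReal (icQ G B j (w n).1 x.1 * icQ G B j (w n).2 x.2) *
        ENNReal.ofReal (icQ G B k x.1 z.1 * icQ G B k x.2 z.2) := by
  induction j with
  | zero =>
    intro n w
    by_cases h : w n = x
    · have : icPre n w ∩ (icStay B n (0 + k) ∩ ({ω | ω (n + 0) = x} ∩ {ω | ω (n + 0 + k) = z})) =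
          icPre n w ∩ (icStay B n k ∩ {ω | ω (n + k) = z}) := by
        ext ω
        simp only [Set.mem_inter_iff, Set.mem_setOf_eq, zero_add, add_zero]
        constructor
        · rintro ⟨a, b, c, d⟩; exact ⟨a, b, d⟩
        · rintro ⟨a, b, d⟩; exact ⟨a, b, by rw [← h]; exact a n le_rfl, d⟩
      rw [this, ic_law1 G hpos B o ν hν, ← h]
      simp [icQ]
    · have : icPre n w ∩ (icStay B n (0 + k) ∩ ({ω | ω (n + 0) = x} ∩ {ω | ω (n + 0 + k) = z})) = ∅ := by
        refine Set.eq_empty_iff_forall_notMem.2 fun ω hω => h ?_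
        rw [← hω.1 n le_rfl]; exact hω.2.2.1
      rw [this, measure_empty]
      have h0 : icQ G B 0 (w n).1 x.1 * icQ G B 0 (w n).2 x.2 = 0 := by
        simp only [icQ]
        by_cases h1 : (w n).1 = x.1
        · have h2 : (w n).2 ≠ x.2 := fun h2 => h (Prod.ext h1 h2)
          simp [h2]
        · simp [h1]
      rw [h0]; simp
  | succ j ih =>
    intro n w
    rw [show j + 1 + k = j + k + 1 by ring, icStay_succ, Set.inter_assoc, ic_split B ν n w _
      ((icStay_meas B _ _).inter ((ic_meas_at _ _).inter (ic_meas_at _ _))),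
      ← ic_sum_step G hpos B o ν hν, Finset.sum_mul]
    refine Finset.sum_congr rfl fun z' _ => ?_
    have := ih (n + 1) (Function.update w (n + 1) z')
    rw [Function.update_self] at this
    rw [← this, show n + (j + 1) = n + 1 + j by ring]

/-- Collision at time `n` before leaving `B`. -/
def icCol (B : Finset V) (o : V) (n : ℕ) : Set (ℕ → V × V) :=
  ⋃ y ∈ B, icPre 0 (fun _ => (o, o)) ∩ (icStay B 0 n ∩ {ω | ω (0 + n) = (y, y)})

lemma icCol_meas (B : Finset V) (o : V) (n : ℕ) : MeasurableSet (icCol B o n) :=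
  Finset.measurableSet_biUnion _ fun _ _ =>
    (icPre_meas _ _).inter ((icStay_meas _ _ _).inter (ic_meas_at _ _))

lemma icCol_prob (G : SimpleGraph V) [G.LocallyFinite] (hpos : ∀ x, 0 < G.degree x)
    (B : Finset V) (o : V) (ν : Measure (ℕ → V × V)) (hν : IsSRWPairLaw G o o ν) (n : ℕ) :
    ν (icCol B o n) = ENNReal.ofReal (icC G B n o) := by
  unfold icCol icC
  rw [measure_biUnion_finset]
  · rw [ENNReal.ofReal_sum_of_nonneg fun y _ => mul_self_nonneg _]
    refine Finset.sum_congr rfl fun y _ => ?_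
    rw [ic_law1 G hpos B o ν hν n (y, y) 0, icPre_zero G o ν hν, one_mul]
  · intro y _ y' _ hyy
    refine Set.disjoint_left.2 fun ω h1 h2 => hyy ?_
    have a : ω (0 + n) = (y, y) := h1.2.2
    have b : ω (0 + n) = (y', y') := h2.2.2
    rw [a] at b
    exact congrArg Prod.fst b
  · exact fun _ _ => (icPre_meas _ _).inter ((icStay_meas _ _ _).inter (ic_meas_at _ _))

lemma icCol_prob2 (G : SimpleGraph V) [G.LocallyFinite] (hpos : ∀ x, 0 < G.degree x)
    (B : Finset V) (o : V) (ν : Measure (ℕ → V × V)) (hν : IsSRWPairLaw G o o ν) (m k : ℕ) :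
    ν (icCol B o m ∩ icCol B o (m + k)) ≤
      ∑ x ∈ B, ENNReal.ofReal (icQ G B m o x * icQ G B m o x) * ENNReal.ofReal (icC G B k x) := by
  have hsub : icCol B o m ∩ icCol B o (m + k) ⊆ ⋃ x ∈ B, ⋃ y ∈ B,
      (icPre 0 (fun _ => (o, o)) ∩ (icStay B 0 (m + k) ∩
        ({ω | ω (0 + m) = (x, x)} ∩ {ω | ω (0 + m + k) = (y, y)}))) := by
    rintro ω ⟨h1, h2⟩
    simp only [icCol, Set.mem_iUnion] at h1 h2 ⊢
    obtain ⟨x, hx, h1⟩ := h1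
    obtain ⟨y, hy, h2⟩ := h2
    refine ⟨x, hx, y, hy, h1.1, h2.2.1, h1.2.2, ?_⟩
    have := h2.2.2
    rwa [← add_assoc] at this
  refine (measure_mono hsub).trans ((measure_biUnion_finset_le _ _).trans ?_)
  refine Finset.sum_le_sum fun x _ => ?_
  refine (measure_biUnion_finset_le _ _).trans (le_of_eq ?_)
  unfold icC
  rw [ENNReal.ofReal_sum_of_nonneg fun y _ => mul_self_nonneg _, Finset.mul_sum]
  refine Finset.sum_congr rfl fun y _ => ?_
  rw [ic_law2 G hpos B o ν hν m k (x, x) (y, y) 0, icPre_zero G o ν hν, one_mul]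

end law

/-- Collisions in the ball of radius `r`. -/
lemma ic_ball_collisions [MeasurableSpace V] [MeasurableSingletonClass V]
    (G : SimpleGraph V) [G.LocallyFinite] (hconn : G.Connected) (hinf : Infinite V)
    (o : V) (hdeg : ∀ x : V, G.degree x ≤ 6)
    (ε : ℝ) (hε : 0 < ε) (r : ℕ) (hr : 1 ≤ r)
    (hres : ENNReal.ofReal (12 * ε * r) ≤ effRes G {o} {x : V | G.dist o x ≤ r}ᶜ)
    (ν : Measure (ℕ → V × V)) (hν : IsSRWPairLaw G o o ν) :
    ENNReal.ofReal (ε / 48) ≤ ν {ω | ENNReal.ofReal (3 * ε * r) <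
      ∑' n : ℕ, if (ω n).1 = (ω n).2 then (1 : ℝ≥0∞) else 0} := by
  have hpos := ic_deg_pos G hconn hinf
  have : IsProbabilityMeasure ν := hν.1
  have ho : o ∈ icB G hconn o r := by rw [ic_mem_B]; simp
  set B := icB G hconn o r with hB
  set K : ℝ := 12 * (2 * r + 1) with hK
  have hKpos : 0 < K := by positivity
  set M : ℝ≥0∞ := ∑' n, ν (icCol B o n) with hM
  have hbound : ∀ x ∈ B, ∑' n, ENNReal.ofReal (icC G B n x) ≤ ENNReal.ofReal K := by
    intro x hx
    refine ENNReal.tsum_le_of_sum_range_le fun N => ?_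
    rw [← ENNReal.ofReal_sum_of_nonneg fun n _ => icC_nonneg G B n x]
    exact ENNReal.ofReal_le_ofReal (icC_upper G hconn hinf hdeg o r x hx N)
  have hM' : M = ∑' n, ENNReal.ofReal (icC G B n o) :=
    tsum_congr fun n => icCol_prob G hpos B o ν hν n
  have hMtop : M ≠ ⊤ := by
    rw [hM']
    exact ne_top_of_le_ne_top ENNReal.ofReal_ne_top (hbound o ho)
  have hMlow : ENNReal.ofReal (6 * ε * r) ≤ M := by
    have hU : ∀ N, icU G B N o o ≤ 2 * M.toReal := by
      intro N
      refine (icC_lower G hpos B o ho N).trans ?_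
      gcongr
      have h : ENNReal.ofReal (∑ n ∈ Finset.range (N + 1), icC G B n o) ≤ M := by
        rw [hM', ENNReal.ofReal_sum_of_nonneg fun n _ => icC_nonneg G B n o]
        exact ENNReal.sum_le_tsum _
      exact (ENNReal.ofReal_le_iff_le_toReal hMtop).1 h
    have h := hres.trans (ic_effRes_le G hconn hinf o r (2 * M.toReal) (by positivity) hU)
    rw [ENNReal.ofReal_le_ofReal_iff (by positivity)] at h
    rw [ENNReal.ofReal_le_iff_le_toReal hMtop]
    linarith
  have h2 : 2 * ∑' m, ∑' k, ν (icCol B o m ∩ icCol B o (m + k)) ≤ ENNReal.ofReal (2 * K) * M := by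
    rw [ENNReal.ofReal_mul (by norm_num), show ENNReal.ofReal 2 = 2 by simp, mul_assoc]
    gcongr
    rw [hM', ← ENNReal.tsum_mul_left]
    refine ENNReal.tsum_le_tsum fun m => ?_
    calc ∑' k, ν (icCol B o m ∩ icCol B o (m + k))
        ≤ ∑' k, ∑ x ∈ B, ENNReal.ofReal (icQ G B m o x * icQ G B m o x) *
            ENNReal.ofReal (icC G B k x) :=
          ENNReal.tsum_le_tsum fun k => icCol_prob2 G hpos B o ν hν m k
      _ = ∑ x ∈ B, ∑' k, ENNReal.ofReal (icQ G B m o x * icQ G B m o x) *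
            ENNReal.ofReal (icC G B k x) :=
          Summable.tsum_finsetSum fun _ _ => ENNReal.summable
      _ ≤ ∑ x ∈ B, ENNReal.ofReal (icQ G B m o x * icQ G B m o x) * ENNReal.ofReal K := by
          refine Finset.sum_le_sum fun x hx => ?_
          rw [ENNReal.tsum_mul_left]
          gcongr
          exact hbound x hx
      _ = ENNReal.ofReal K * ENNReal.ofReal (icC G B m o) := by
          unfold icC
          rw [ENNReal.ofReal_sum_of_nonneg fun y _ => mul_self_nonneg _, Finset.mul_sum]
          exact Finset.sum_congr rfl fun x _ => mul_comm _ _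
  have key := ic_second_moment ν (icCol B o) (icCol_meas B o) M (ENNReal.ofReal (2 * K)) hM hMtop
    (by simpa using hKpos) ENNReal.ofReal_ne_top h2
  have hsub : {ω | M / 2 < ∑' n, (icCol B o n).indicator 1 ω} ⊆
      {ω | ENNReal.ofReal (3 * ε * r) <
        ∑' n : ℕ, if (ω n).1 = (ω n).2 then (1 : ℝ≥0∞) else 0} := by
    intro ω hω
    have a : ENNReal.ofReal (3 * ε * r) ≤ M / 2 := by
      rw [ENNReal.le_div_iff_mul_le (by simp) (by simp)]
      refine le_trans (le_of_eq ?_) hMlow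
      rw [show (2 : ℝ≥0∞) = ENNReal.ofReal 2 by simp, ← ENNReal.ofReal_mul (by positivity)]
      congr 1; ring
    have b : ∑' n, (icCol B o n).indicator (1 : (ℕ → V × V) → ℝ≥0∞) ω ≤
        ∑' n : ℕ, if (ω n).1 = (ω n).2 then (1 : ℝ≥0∞) else 0 := by
      refine ENNReal.tsum_le_tsum fun n => ?_
      by_cases h : ω ∈ icCol B o n
      · have h' := h
        simp only [icCol, Set.mem_iUnion] at h'
        obtain ⟨y, _, _, _, h3⟩ := h'
        have h3 : ω n = (y, y) := by simpa using h3
        simp [h, h3]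
      · simp [h]
    exact a.trans_lt (lt_of_lt_of_le hω b)
  set P := ν {ω | ENNReal.ofReal (3 * ε * r) <
      ∑' n : ℕ, if (ω n).1 = (ω n).2 then (1 : ℝ≥0∞) else 0} with hP
  have hPtop : P ≠ ⊤ := measure_ne_top _ _
  have k2 : ENNReal.ofReal (6 * ε * r) ≤ ENNReal.ofReal (8 * K) * P := by
    refine hMlow.trans (key.trans ?_)
    rw [show (4 : ℝ≥0∞) = ENNReal.ofReal 4 by simp, ← ENNReal.ofReal_mul (by norm_num),
      show 4 * (2 * K) = 8 * K by ring]
    exact mul_le_mul_right (measure_mono hsub) _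
  rw [ENNReal.ofReal_le_iff_le_toReal hPtop]
  rw [ENNReal.ofReal_le_iff_le_toReal (ENNReal.mul_ne_top ENNReal.ofReal_ne_top hPtop),
    ENNReal.toReal_mul, ENNReal.toReal_ofReal (by positivity), hK] at k2
  have hr' : (1 : ℝ) ≤ r := by exact_mod_cast hr
  have hP0 : 0 ≤ P.toReal := ENNReal.toReal_nonneg
  have k3 : 6 * ε * r ≤ 288 * r * P.toReal := by
    refine k2.trans (mul_le_mul_of_nonneg_right ?_ hP0)
    linarith
  have k4 : r * (6 * ε) ≤ r * (288 * P.toReal) := by linarith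
  have := le_of_mul_le_mul_left k4 (by linarith)
  linarith

/-- Suppose every vertex of `G` has degree at most `6` and that
for some `ε > 0`, every graph-metric ball `B_r` (`r ≥ 1`) satisfies
`12εr ≤ R_eff(0, V∖B_r) ≤ r`.  Then two independent simple random walks on `G`,
both started at `0`, collide infinitely often with probability at least `ε²/12`. -/
theorem infinite_collisions_from_resistance
    [MeasurableSpace V] [MeasurableSingletonClass V]
    (G : SimpleGraph V) [G.LocallyFinite] (hconn : G.Connected) (hinf : Infinite V)
    (o : V) (hdeg : ∀ x : V, G.degree x ≤ 6)
    (ε : ℝ) (hε : 0 < ε)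
    (hres : ∀ r : ℕ, 1 ≤ r →
      ENNReal.ofReal (12 * ε * r) ≤ effRes G {o} {x : V | G.dist o x ≤ r}ᶜ ∧
        effRes G {o} {x : V | G.dist o x ≤ r}ᶜ ≤ (r : ℝ≥0∞))
    (ν : Measure (ℕ → V × V)) (hν : IsSRWPairLaw G o o ν) :
    ENNReal.ofReal (ε ^ 2 / 12) ≤
      ν {ω | (∑' n : ℕ, if (ω n).1 = (ω n).2 then (1 : ℝ≥0∞) else 0) = ⊤} := by
  classical
  have hVc : Countable V := by
    have : (Set.univ : Set V) = ⋃ r : ℕ, {x : V | G.dist o x ≤ r} := by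
      ext x
      simp only [Set.mem_univ, Set.mem_iUnion, Set.mem_setOf_eq, true_iff]
      exact ⟨_, le_rfl⟩
    rw [← Set.countable_univ_iff, this]
    exact Set.countable_iUnion fun r => (ic_ball_finite G hconn o r).countable
  have hprob : IsProbabilityMeasure ν := hν.1
  set H : (ℕ → V × V) → ℝ≥0∞ :=
    fun ω => ∑' n : ℕ, if (ω n).1 = (ω n).2 then (1 : ℝ≥0∞) else 0 with hH
  have hHm : Measurable H := by
    refine Measurable.ennreal_tsum fun n => ?_
    refine Measurable.ite ?_ measurable_const measurable_const
    exact measurableSet_preimage (measurable_pi_apply (X := fun _ : ℕ => V × V) n)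
      (MeasurableSet.of_discrete (s := {z : V × V | z.1 = z.2}))
  have h12 : ε ≤ 1 / 12 := by
    obtain ⟨h1, h2⟩ := hres 1 le_rfl
    have h := h1.trans h2
    rw [ENNReal.ofReal_le_iff_le_toReal (by simp)] at h
    norm_num at h
    linarith
  have hset : {ω | H ω = ⊤} = ⋂ r : ℕ, {ω | ENNReal.ofReal (3 * ε * (r + 1 : ℕ)) < H ω} := by
    ext ω
    simp only [Set.mem_setOf_eq, Set.mem_iInter]
    constructor
    · intro h r
      rw [h]; exact ENNReal.ofReal_lt_top
    · intro h
      by_contra hne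
      obtain ⟨r, hr⟩ := exists_nat_gt ((H ω).toReal / (3 * ε))
      have h1 := h r
      rw [ENNReal.ofReal_lt_iff_lt_toReal (by positivity) hne] at h1
      rw [div_lt_iff₀ (by positivity)] at hr
      push_cast at h1
      linarith
  have hanti : Antitone fun r : ℕ => {ω | ENNReal.ofReal (3 * ε * (r + 1 : ℕ)) < H ω} := by
    intro r s hrs ω hω
    refine lt_of_le_of_lt (ENNReal.ofReal_le_ofReal ?_) hω
    gcongr
  have hlim := tendsto_measure_iInter_atTop (μ := ν)
    (fun r : ℕ => (measurableSet_lt measurable_const hHm :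
      MeasurableSet {ω | ENNReal.ofReal (3 * ε * (r + 1 : ℕ)) < H ω}).nullMeasurableSet)
    hanti ⟨0, measure_ne_top _ _⟩
  have hge : ENNReal.ofReal (ε / 48) ≤ ν {ω | H ω = ⊤} := by
    rw [hset]
    refine ge_of_tendsto' hlim fun r => ?_
    exact ic_ball_collisions G hconn hinf o hdeg ε hε (r + 1) (by omega)
      (hres (r + 1) (by omega)).1 ν hν
  refine le_trans (ENNReal.ofReal_le_ofReal ?_) hge
  nlinarith

end
end

section
/- Suppose in addition that every vertex of G has degree at most 6. Then the expected number of collisions of two independent simple random walks on G killed upon exiting B, both started at 0, satisfies the upper bound E_{0,0}(Z_B) ≤ 6 R_eff(0, V∖B). -/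
open MeasureTheory ENNReal
open scoped Classical

noncomputable section

variable {V : Type*}

/-- Total probability of the paths of length `n` from `a` to `y`. -/
def pathP (G : SimpleGraph V) [G.LocallyFinite] (B : Set V) (a : V) (n : ℕ) (y : Option V) :
    ℝ≥0∞ :=
  ∑' w : Fin (n + 1) → Option V, if w (Fin.last n) = y then killedCylProb G B a w else 0

lemma cyl_snoc (G : SimpleGraph V) [G.LocallyFinite] (B : Set V) (a : V) (n : ℕ)
    (w : Fin (n + 1) → Option V) (z : Option V) :
    killedCylProb G B a (Fin.snoc w z : Fin (n + 1 + 1) → Option V) =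
      killedCylProb G B a w * killedStep G B (w (Fin.last n)) z := by
  unfold killedCylProb
  rw [Fin.prod_univ_castSucc, ← mul_assoc]
  have h0 : (Fin.snoc w z : Fin (n + 1 + 1) → Option V) 0 = w 0 := by
    rw [← Fin.castSucc_zero, Fin.snoc_castSucc (α := fun _ => Option V)]
  rw [h0]
  congr 1
  · congr 1
    refine Finset.prod_congr rfl fun i _ => ?_
    rw [Fin.succ_castSucc, Fin.snoc_castSucc (α := fun _ => Option V),
      Fin.snoc_castSucc (α := fun _ => Option V)]
  · rw [Fin.succ_last, Fin.snoc_castSucc (α := fun _ => Option V),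
      Fin.snoc_last (α := fun _ => Option V)]

lemma pathP_succ (G : SimpleGraph V) [G.LocallyFinite] (B : Set V) (a : V) (n : ℕ)
    (y : Option V) :
    pathP G B a (n + 1) y = ∑' s, pathP G B a n s * killedStep G B s y := by
  have hL : pathP G B a (n + 1) y = ∑' w : Fin (n + 1) → Option V,
      killedCylProb G B a w * killedStep G B (w (Fin.last n)) y := by
    unfold pathP
    rw [← (Fin.snocEquiv fun _ : Fin (n + 1 + 1) => Option V).tsum_eq, ENNReal.tsum_prod',
      tsum_eq_single y]
    · refine tsum_congr fun w => ?_
      rw [Fin.snocEquiv_apply]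
      simp only [Fin.snoc_last, if_true]
      exact cyl_snoc G B a n w y
    · intro z hz
      rw [ENNReal.tsum_eq_zero]
      intro w
      rw [Fin.snocEquiv_apply]
      simp [hz]
  rw [hL]
  unfold pathP
  simp_rw [← ENNReal.tsum_mul_right]
  rw [ENNReal.tsum_comm]
  refine tsum_congr fun w => ?_
  rw [tsum_eq_single (w (Fin.last n))]
  · simp
  · intro s hs
    simp [hs.symm]

lemma pathP_zero (G : SimpleGraph V) [G.LocallyFinite] (B : Set V) (a : V) (y : Option V) :
    pathP G B a 0 y = if y = some a then 1 else 0 := by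
  unfold pathP killedCylProb
  rw [tsum_eq_single (fun _ => y)]
  · simp
  · intro w hw
    have : w (Fin.last 0) ≠ y := by
      intro h
      apply hw
      funext i
      rw [← h]
      congr 1
      exact Fin.ext (by omega)
    rw [if_neg this]

lemma countable_of_conn (G : SimpleGraph V) [G.LocallyFinite] (hconn : G.Connected) :
    Countable V := by
  obtain ⟨o⟩ := hconn.nonempty
  let S : ℕ → Set V := fun n => Nat.rec {o} (fun _ T => ⋃ x ∈ T, (G.neighborFinset x : Set V)) n
  have hS : ∀ n, (S n).Finite := by
    intro n
    induction n with
    | zero => exact Set.finite_singleton o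
    | succ n ih => exact ih.biUnion fun x _ => Finset.finite_toSet _
  have hw : ∀ v, ∃ n, v ∈ S n := by
    intro v
    obtain ⟨p⟩ := hconn.preconnected v o
    have key : ∀ (a b : V) (p : G.Walk a b), b = o → ∃ n, a ∈ S n := by
      intro a b p
      induction p with
      | nil => intro h; exact ⟨0, h⟩
      | cons h p ih =>
        intro hb
        obtain ⟨n, hn⟩ := ih hb
        refine ⟨n + 1, ?_⟩
        change _ ∈ ⋃ x ∈ S n, (G.neighborFinset x : Set V)
        simp only [Set.mem_iUnion]
        refine ⟨_, hn, ?_⟩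
        simpa using h.symm
    exact key v o p rfl
  have : (Set.univ : Set V) ⊆ ⋃ n, S n := fun v _ => Set.mem_iUnion.2 (hw v)
  exact Set.countable_univ_iff.1 ((Set.countable_iUnion fun n => (hS n).countable).mono this)

lemma hit_le [Countable V] (G : SimpleGraph V) [G.LocallyFinite] (B : Set V) (o : V)
    (ν : Measure (ℕ → Option V × Option V)) (hν : IsKilledPairLaw G B o o ν) (n : ℕ)
    (y : Option V) :
    ν {ω | ω n = (y, y)} ≤ pathP G B o n y * pathP G B o n y := by
  have hsub : {ω : ℕ → Option V × Option V | ω n = (y, y)} ⊆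
      ⋃ w : {w : Fin (n + 1) → Option V × Option V // w (Fin.last n) = (y, y)},
        {ω | ∀ i : Fin (n + 1), ω i = w.1 i} := by
    intro ω hω
    refine Set.mem_iUnion.2 ⟨⟨fun i => ω i, ?_⟩, fun i => rfl⟩
    simpa using hω
  refine (measure_mono hsub).trans ((measure_iUnion_le _).trans (le_of_eq ?_))
  simp_rw [hν.2]
  refine (tsum_subtype {w : Fin (n + 1) → Option V × Option V | w (Fin.last n) = (y, y)}
    (fun w => killedCylProb G B o (fun i => (w i).1) *
      killedCylProb G B o (fun i => (w i).2))).trans ?_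
  unfold pathP
  rw [← (Equiv.arrowProdEquivProdArrow (Fin (n + 1)) (fun _ => Option V)
    (fun _ => Option V)).symm.tsum_eq, ENNReal.tsum_prod']
  rw [← ENNReal.tsum_mul_right]
  refine tsum_congr fun w => ?_
  rw [← ENNReal.tsum_mul_left]
  refine tsum_congr fun w' => ?_
  simp only [Set.indicator_apply, Set.mem_setOf_eq, Equiv.arrowProdEquivProdArrow_symm_apply,
    Prod.mk.injEq]
  by_cases h1 : w (Fin.last n) = y <;> by_cases h2 : w' (Fin.last n) = y <;> simp [h1, h2]

lemma lintegral_le [Countable V] (G : SimpleGraph V) [G.LocallyFinite] (B : Set V)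
    [Fintype B] (o : V)
    (ν : Measure (ℕ → Option V × Option V)) (hν : IsKilledPairLaw G B o o ν) :
    ∫⁻ ω, collisions B ω ∂ν ≤
      ∑' n, ∑ x : B, pathP G B o n (some x) * pathP G B o n (some x) := by
  have hms : ∀ n (x : V), MeasurableSet {ω : ℕ → Option V × Option V | ω n = (some x, some x)} := by
    intro n x
    have : {ω : ℕ → Option V × Option V | ω n = (some x, some x)} =
        (fun ω : ℕ → Option V × Option V => ω n) ⁻¹' ({some x} ×ˢ {some x}) := by
      ext ω; simp
    rw [this]
    refine (measurable_pi_apply n) (MeasurableSet.prod ?_ ?_) <;> exact trivial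
  have hle : ∀ ω, collisions B ω ≤ ∑' n, ∑ x : B,
      Set.indicator {ω : ℕ → Option V × Option V | ω n = (some x.1, some x.1)}
        (fun _ => (1 : ℝ≥0∞)) ω := by
    intro ω
    refine ENNReal.tsum_le_tsum fun n => ?_
    split_ifs with h
    · obtain ⟨x, hx, h1, h2⟩ := h
      refine le_trans ?_ (Finset.single_le_sum (fun _ _ => zero_le) (Finset.mem_univ (⟨x, hx⟩ : B)))
      rw [Set.indicator_of_mem]
      exact Prod.ext h1 h2
    · exact zero_le
  refine (lintegral_mono hle).trans ?_
  rw [lintegral_tsum]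
  · refine ENNReal.tsum_le_tsum fun n => ?_
    rw [lintegral_finsetSum]
    · refine Finset.sum_le_sum fun x _ => ?_
      rw [lintegral_indicator_const (hms n x), one_mul]
      exact hit_le G B o ν hν n _
    · intro x _
      exact measurable_const.indicator (hms n x)
  · intro n
    refine (Finset.measurable_sum _ fun x _ => ?_).aemeasurable
    exact measurable_const.indicator (hms n x)

/-- The transition matrix of the killed walk on `B`. -/
def tmat (G : SimpleGraph V) [G.LocallyFinite] (B : Set V) : Matrix B B ℝ :=
  Matrix.of fun x y => if G.Adj x y then ((G.degree x : ℝ))⁻¹ else 0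

lemma deg_pos_of_adj (G : SimpleGraph V) [G.LocallyFinite] {x y : V} (h : G.Adj x y) :
    0 < (G.degree x : ℝ) := by
  exact_mod_cast (G.degree_pos_iff_exists_adj x).2 ⟨y, h⟩

lemma tmat_pow_nonneg (G : SimpleGraph V) [G.LocallyFinite] (B : Set V) [Fintype B] (n : ℕ)
    (x y : B) : 0 ≤ (tmat G B ^ n) x y := by
  induction n generalizing y with
  | zero => simp only [pow_zero, Matrix.one_apply]; split_ifs <;> norm_num
  | succ n ih =>
    rw [pow_succ, Matrix.mul_apply]
    refine Finset.sum_nonneg fun z _ => mul_nonneg (ih z) ?_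
    simp only [tmat, Matrix.of_apply]; split_ifs <;> positivity

lemma pathP_eq (G : SimpleGraph V) [G.LocallyFinite] (B : Set V) [Fintype B] (o y : B) (n : ℕ) :
    pathP G B o n (some y) = ENNReal.ofReal ((tmat G B ^ n) o y) := by
  induction n generalizing y with
  | zero =>
    rw [pathP_zero, pow_zero, Matrix.one_apply]
    by_cases h : o = y
    · simp [h]
    · have : ¬ (y : V) = o := fun h' => h (Subtype.ext h'.symm)
      simp [h, this]
  | succ n ih =>
    rw [pathP_succ, pow_succ, Matrix.mul_apply, ENNReal.ofReal_sum_of_nonneg]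
    · have hinj : Function.Injective (fun x : B => some (x : V)) := by
        intro a b h
        simpa [Subtype.ext_iff] using h
      rw [← tsum_fintype (L := SummationFilter.unconditional _),
        ← hinj.tsum_eq]
      · refine tsum_congr fun x => ?_
        rw [ih, ENNReal.ofReal_mul (tmat_pow_nonneg G B n o x)]
        congr 1
        simp only [killedStep, tmat, Matrix.of_apply]
        by_cases h : G.Adj x y
        · simp [h, ENNReal.ofReal_inv_of_pos (deg_pos_of_adj G h)]
        · simp [h]
      · intro s hs
        rw [Function.mem_support] at hs
        cases s with
        | none => exact absurd (by simp [killedStep]) hs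
        | some x =>
          by_cases hx : x ∈ B
          · exact ⟨⟨x, hx⟩, rfl⟩
          · exact absurd (by simp [killedStep, hx]) hs
    · intro x _
      refine mul_nonneg (tmat_pow_nonneg G B n o x) ?_
      simp only [tmat, Matrix.of_apply]; split_ifs <;> positivity

lemma tmat_rev (G : SimpleGraph V) [G.LocallyFinite] (B : Set V) (x y : B) :
    (G.degree x : ℝ) * tmat G B x y = if G.Adj x y then 1 else 0 := by
  simp only [tmat, Matrix.of_apply]
  split_ifs with h
  · exact mul_inv_cancel₀ (deg_pos_of_adj G h).ne'
  · simp

lemma tmat_pow_rev (G : SimpleGraph V) [G.LocallyFinite] (B : Set V) [Fintype B] (n : ℕ)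
    (x y : B) :
    (G.degree x : ℝ) * (tmat G B ^ n) x y = (G.degree y : ℝ) * (tmat G B ^ n) y x := by
  induction n generalizing x y with
  | zero =>
    by_cases h : x = y
    · rw [h]
    · simp [h, Ne.symm h]
  | succ n ih =>
    rw [pow_succ, Matrix.mul_apply, ← pow_succ, pow_succ', Matrix.mul_apply, Finset.mul_sum,
      Finset.mul_sum]
    refine Finset.sum_congr rfl fun z _ => ?_
    have h1 := tmat_rev G B z y
    have h2 := tmat_rev G B y z
    rw [G.adj_comm] at h1
    rw [← h2] at h1
    linear_combination tmat G B z y * ih x z + (tmat G B ^ n) z x * h1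

/-- Truncated Green function. -/
def greenN (G : SimpleGraph V) [G.LocallyFinite] (B : Set V) [Fintype B] (N : ℕ) (x o : B) : ℝ :=
  ∑ n ∈ Finset.range N, (tmat G B ^ n) x o

lemma sum_sq_le (G : SimpleGraph V) [G.LocallyFinite] (hdeg : ∀ x : V, G.degree x ≤ 6)
    (B : Set V) [Fintype B] (o : B) (ho : 0 < (G.degree o : ℝ)) (n : ℕ) :
    ∑ x : B, (tmat G B ^ n) o x * (tmat G B ^ n) o x ≤
      6 / (G.degree o : ℝ) * (tmat G B ^ (2 * n)) o o := by
  rw [two_mul, pow_add, Matrix.mul_apply, Finset.mul_sum]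
  refine Finset.sum_le_sum fun x _ => ?_
  have h := tmat_pow_rev G B n o x
  have h1 := tmat_pow_nonneg G B n o x
  have h2 := tmat_pow_nonneg G B n x o
  have h3 : (G.degree x : ℝ) ≤ 6 := by exact_mod_cast hdeg x
  have h4 : (tmat G B ^ n) o x ≤ 6 / (G.degree o : ℝ) * (tmat G B ^ n) x o := by
    rw [div_mul_eq_mul_div, le_div_iff₀ ho]
    nlinarith
  nlinarith [mul_le_mul_of_nonneg_left h4 h1]

lemma sum_sum_le (G : SimpleGraph V) [G.LocallyFinite] (hdeg : ∀ x : V, G.degree x ≤ 6)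
    (B : Set V) [Fintype B] (o : B) (ho : 0 < (G.degree o : ℝ)) (N : ℕ) :
    ∑ n ∈ Finset.range N, ∑ x : B, (tmat G B ^ n) o x * (tmat G B ^ n) o x ≤
      6 / (G.degree o : ℝ) * greenN G B (2 * N) o o := by
  refine (Finset.sum_le_sum fun n _ => sum_sq_le G hdeg B o ho n).trans ?_
  rw [← Finset.mul_sum]
  refine mul_le_mul_of_nonneg_left ?_ (by positivity)
  unfold greenN
  rw [← Finset.sum_image (s := Finset.range N) (g := fun n => 2 * n)
    (f := fun m => (tmat G B ^ m) o o) (by intro a _ b _ h; simpa using h)]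
  refine Finset.sum_le_sum_of_subset_of_nonneg ?_ fun m _ _ => tmat_pow_nonneg G B m o o
  intro m hm
  simp only [Finset.mem_image, Finset.mem_range] at hm ⊢
  omega

/-- Energy of a function supported in the finite set `B`. -/
lemma energy_eq_s6 (G : SimpleGraph V) [G.LocallyFinite] (B : Set V) [Fintype B] (f : V → ℝ)
    (hf : ∀ x, x ∉ B → f x = 0) :
    energy G f = ENNReal.ofReal
      (∑ x : B, (G.degree x : ℝ) * f x * (f x - ∑ y : B, tmat G B x y * f y)) := by
  set S : Finset V := B.toFinset with hS
  set T : Finset V := S ∪ S.biUnion (fun x => G.neighborFinset x) with hT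
  have hST : S ⊆ T := Finset.subset_union_left
  have hmem : ∀ x, x ∈ S ↔ x ∈ B := fun x => by simp [hS]
  have hnb : ∀ x ∈ S, ∀ y, G.Adj x y → y ∈ T := by
    intro x hx y h
    refine Finset.mem_union_right _ (Finset.mem_biUnion.2 ⟨x, hx, by simpa using h⟩)
  have hz : ∀ x, x ∉ S → f x = 0 := fun x hx => hf x (fun h => hx ((hmem x).2 h))
  set a : V → V → ℝ := fun x y => if G.Adj x y then 1 else 0 with ha
  have hsym : ∀ x y, a x y = a y x := fun x y => by simp only [ha, G.adj_comm]
  have hterm : ∀ p : V × V, (if G.Adj p.1 p.2 then ENNReal.ofReal ((f p.1 - f p.2) ^ 2) else 0) =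
      ENNReal.ofReal (a p.1 p.2 * (f p.1 - f p.2) ^ 2) := by
    intro p
    simp only [ha]
    split_ifs <;> simp
  have hann : ∀ x y, 0 ≤ a x y := by
    intro x y; simp only [ha]; split_ifs <;> norm_num
  unfold energy
  simp_rw [hterm]
  rw [tsum_eq_sum (s := T ×ˢ T), ← ENNReal.ofReal_sum_of_nonneg]
  · have hhalf : (1 / 2 : ℝ≥0∞) = ENNReal.ofReal (1 / 2) := by
      rw [ENNReal.ofReal_div_of_pos (by norm_num)]; simp
    rw [hhalf, ← ENNReal.ofReal_mul (by norm_num)]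
    congr 1
    rw [Finset.sum_product]
    have e1 : ∑ x ∈ T, ∑ y ∈ T, a x y * (f x - f y) ^ 2 =
        2 * (∑ x ∈ T, ∑ y ∈ T, a x y * f x * f x - ∑ x ∈ T, ∑ y ∈ T, a x y * f x * f y) := by
      have e2 : ∑ x ∈ T, ∑ y ∈ T, a x y * f x * f x = ∑ x ∈ T, ∑ y ∈ T, a x y * f y * f y := by
        rw [Finset.sum_comm]
        refine Finset.sum_congr rfl fun x _ => Finset.sum_congr rfl fun y _ => ?_
        rw [hsym]
      have e3 : ∑ x ∈ T, ∑ y ∈ T, a x y * (f x - f y) ^ 2 =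
          ∑ x ∈ T, ∑ y ∈ T, a x y * f x * f x + ∑ x ∈ T, ∑ y ∈ T, a x y * f y * f y
            - 2 * ∑ x ∈ T, ∑ y ∈ T, a x y * f x * f y := by
        simp_rw [Finset.mul_sum, ← Finset.sum_add_distrib, ← Finset.sum_sub_distrib]
        refine Finset.sum_congr rfl fun x _ => Finset.sum_congr rfl fun y _ => ?_
        ring
      rw [e3, ← e2]; ring
    rw [e1, ← mul_assoc]
    norm_num
    rw [← Finset.sum_sub_distrib, ← Finset.sum_subset hST]
    · rw [Finset.sum_subtype S hmem]
      refine Finset.sum_congr rfl fun x _ => ?_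
      have hxS : (x : V) ∈ S := (hmem x).2 x.2
      have d1 : ∑ y ∈ T, a x y * f x * f x = (G.degree x : ℝ) * f x * f x := by
        rw [← Finset.sum_mul, ← Finset.sum_mul]
        congr 2
        simp only [ha]
        rw [Finset.sum_boole, ← G.card_neighborFinset_eq_degree]
        congr 2
        ext y
        simp only [Finset.mem_filter, SimpleGraph.mem_neighborFinset]
        exact ⟨fun h => h.2, fun h => ⟨hnb x hxS y h, h⟩⟩
      have d2 : ∑ y ∈ T, a x y * f x * f y =
          (G.degree x : ℝ) * f x * ∑ y : B, tmat G B x y * f y := by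
        rw [← Finset.sum_subset hST (fun y _ hy => by simp [hz y hy]),
          Finset.sum_subtype S hmem, Finset.mul_sum]
        refine Finset.sum_congr rfl fun y _ => ?_
        have h := tmat_rev G B x y
        change _ = a x y at h
        linear_combination -(f x * f y) * h
      rw [d1, d2]; ring
    · intro x _ hx
      simp [hz x hx]
  · intro p _
    exact mul_nonneg (hann _ _) (sq_nonneg _)
  · rintro ⟨x, y⟩ hp
    simp only [ha]
    split_ifs with h
    · have hx : x ∉ S := fun hx => hp (Finset.mem_product.2 ⟨hST hx, hnb x hx y h⟩)
      have hy : y ∉ S := fun hy => hp (Finset.mem_product.2 ⟨hnb y hy x h.symm, hST hy⟩)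
      simp [hz x hx, hz y hy]
    · simp


lemma green_le (G : SimpleGraph V) [G.LocallyFinite] (B : Set V) [Fintype B] (o : B)
    (ho : 0 < (G.degree o : ℝ)) (N : ℕ) :
    ENNReal.ofReal (greenN G B N o o / (G.degree o : ℝ)) ≤ effRes G {(o : V)} Bᶜ := by
  have hgnn : ∀ x, 0 ≤ greenN G B N x o := fun x =>
    Finset.sum_nonneg fun n _ => tmat_pow_nonneg G B n x o
  rcases (hgnn o).eq_or_lt with h0 | hc
  · rw [← h0]; simp
  set c := greenN G B N o o with hcdef
  have hharm : ∀ x, greenN G B N x o - ∑ y : B, tmat G B x y * greenN G B N y o =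
      (1 : Matrix B B ℝ) x o - (tmat G B ^ N) x o := by
    intro x
    have h1 : ∑ y : B, tmat G B x y * greenN G B N y o =
        ∑ n ∈ Finset.range N, (tmat G B ^ (n + 1)) x o := by
      unfold greenN
      simp_rw [Finset.mul_sum]
      rw [Finset.sum_comm]
      refine Finset.sum_congr rfl fun n _ => ?_
      rw [pow_succ', Matrix.mul_apply]
    rw [h1]
    unfold greenN
    rw [← Finset.sum_sub_distrib, Finset.sum_range_sub' (fun n => (tmat G B ^ n) x o), pow_zero]
  set f : V → ℝ := fun x => if hx : x ∈ B then greenN G B N ⟨x, hx⟩ o / c else 0 with hf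
  have hfB : ∀ x : B, f x = greenN G B N x o / c := fun x => by simp [hf]
  have hf0 : ∀ x, x ∉ B → f x = 0 := fun x hx => by simp [hf, hx]
  have hE : energy G f ≤ ENNReal.ofReal ((G.degree o : ℝ) / c) := by
    rw [energy_eq_s6 G B f hf0]
    refine ENNReal.ofReal_le_ofReal ?_
    have hx : ∀ x : B, (G.degree x : ℝ) * f x * (f x - ∑ y : B, tmat G B x y * f y) ≤
        if x = o then (G.degree o : ℝ) / c else 0 := by
      intro x
      have h1 : f x - ∑ y : B, tmat G B x y * f y =
          ((1 : Matrix B B ℝ) x o - (tmat G B ^ N) x o) / c := by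
        rw [← hharm x, sub_div, Finset.sum_div, hfB]
        congr 1
        refine Finset.sum_congr rfl fun y _ => ?_
        rw [hfB, mul_div_assoc]
      have h2 : (G.degree x : ℝ) * f x * (f x - ∑ y : B, tmat G B x y * f y) ≤
          (G.degree x : ℝ) * f x * ((1 : Matrix B B ℝ) x o / c) := by
        rw [h1]
        refine mul_le_mul_of_nonneg_left ?_ ?_
        · refine div_le_div_of_nonneg_right ?_ hc.le
          linarith [tmat_pow_nonneg G B N x o]
        · rw [hfB]
          exact mul_nonneg (Nat.cast_nonneg _) (div_nonneg (hgnn x) hc.le)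
      refine h2.trans (le_of_eq ?_)
      split_ifs with h
      · subst h
        rw [hfB, ← hcdef, div_self hc.ne']
        simp [div_eq_mul_inv]
      · simp [h]
    refine (Finset.sum_le_sum fun x _ => hx x).trans ?_
    simp
  unfold effRes
  rw [show c / (G.degree o : ℝ) = ((G.degree o : ℝ) / c)⁻¹ by rw [inv_div],
    ENNReal.ofReal_inv_of_pos (div_pos ho hc)]
  refine ENNReal.inv_le_inv.2 (le_trans ?_ hE)
  refine iInf₂_le f ⟨ne_top_of_le_ne_top ENNReal.ofReal_ne_top hE, ?_, fun x hx => hf0 x hx⟩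
  intro x hx
  rw [Set.mem_singleton_iff] at hx
  rw [hx, hfB, ← hcdef, div_self hc.ne']

/-- If moreover every vertex of `G` has degree at most `6`, then
the expected number of collisions of two independent simple random walks on `G`
killed upon exiting `B`, both started at `0`, is at most `6 R_eff(0, V∖B)`. -/
theorem first_moment_resistance_upper_bound
    (G : SimpleGraph V) [G.LocallyFinite] (hconn : G.Connected) (hnt : Nontrivial V)
    (hdeg : ∀ x : V, G.degree x ≤ 6)
    (o : V) (B : Set V) (hB : B.Finite) (hoB : o ∈ B) (hBV : B ≠ Set.univ)
    (ν : Measure (ℕ → Option V × Option V)) (hν : IsKilledPairLaw G B o o ν) :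
    ∫⁻ ω, collisions B ω ∂ν ≤ 6 * effRes G {o} Bᶜ := by
  haveI : Countable V := countable_of_conn G hconn
  haveI : Fintype B := hB.fintype
  have ho : 0 < (G.degree o : ℝ) := by
    exact_mod_cast hconn.preconnected.degree_pos_of_nontrivial o
  refine (lintegral_le G B o ν hν).trans ?_
  refine ENNReal.tsum_le_of_sum_range_le fun N => ?_
  have h1 : ∀ n, ∑ x : B, pathP G B o n (some x) * pathP G B o n (some x) =
      ENNReal.ofReal (∑ x : B, (tmat G B ^ n) ⟨o, hoB⟩ x * (tmat G B ^ n) ⟨o, hoB⟩ x) := by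
    intro n
    rw [ENNReal.ofReal_sum_of_nonneg
      (fun x _ => mul_nonneg (tmat_pow_nonneg G B n _ x) (tmat_pow_nonneg G B n _ x))]
    refine Finset.sum_congr rfl fun x _ => ?_
    rw [ENNReal.ofReal_mul (tmat_pow_nonneg G B n _ x), ← pathP_eq]
  simp_rw [h1]
  rw [← ENNReal.ofReal_sum_of_nonneg (fun n _ => Finset.sum_nonneg
      (fun x _ => mul_nonneg (tmat_pow_nonneg G B n _ x) (tmat_pow_nonneg G B n _ x)))]
  refine (ENNReal.ofReal_le_ofReal (sum_sum_le G hdeg B ⟨o, hoB⟩ ho N)).trans ?_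
  rw [div_mul_eq_mul_div, mul_div_assoc, ENNReal.ofReal_mul (by norm_num)]
  have h6 : ENNReal.ofReal 6 = 6 := by simp
  rw [h6]
  gcongr
  exact green_le G B ⟨o, hoB⟩ ho (2 * N)

end
end
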